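/- arXiv:math/0502331 — 5 statements merged into one kernel-verified Lean document; each statement's English description precedes it below -/
import Mathlib

section
/- Let i,j ∈ {1,…,n} with i > j and let I,J ⊆ {1,…,n} with |I| = |J|. If i ∈ J, j ∈ I, and I∖{j} = J∖{i}, then r(X_{ij},[I|J]) = q̂ (−q)^{−|(j,i)∩I∩J|}, where (j,i) denotes the open integer interval {j+1,…,i−1}; in all other cases r(X_{ij},[I|J]) = 0. Moreover, in the nonzero case the exponent satisfies −|(j,i)∩I∩J| = |[1,j)∩I| − |[1,i)∩J|. -/
/-!
By condition (iii), `b ↦ (r(X_{ij}, b))_{ij}` is an anti-homomorphism from `A` to `n × n` matrices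
(`r_X_mul`), and on a generator `X_{lM}` its value is a diagonal matrix (`l = M`), the multiple
`q̂ E_{Ml}` of a matrix unit (`l < M`), or zero. Combined with the Laplace expansion of `[I|J]`
along its last column (`qMinor_laplace`), with `M = max J`, this expresses `r(X_{ij}, [I|J])`
through the values at the minors `[I∖l|J∖M]` (`r_X_qMinor`).

All the values, including those with `i ≤ j`, are then found by induction on `|I|`
(`r_X_qMinor_eq`, with the answer `pairVal`). If `i ≠ M`, only the term `l = M` survives and the
formula is inherited from `[I∖M|J∖M]` (`pairVal_erase`). If `i = M > j`, every term
vanishes unless `j ∈ I` and `I∖j = J∖M`, in which case the surviving terms are `l = j` and the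
`l ∈ I` with `l > j`; for `x = -q` and `d = |(j,i) ∩ I ∩ J|` they add up to
`q̂ (x^d - (x - x⁻¹)(x^{d-1} + x^{d-3} + ⋯ + x^{-(d-1)})) = q̂ x^{-d}` (`telescope`, `sum_pairVal`).
-/

open scoped TensorProduct
open scoped Classical

noncomputable section

namespace QMat

variable (k : Type*) [Field k] (n : ℕ) (q : k)

/-- Defining relations of the quantized coordinate ring `O_q(M_n(k))`. -/
inductive Rel : FreeAlgebra k (Fin n × Fin n) → FreeAlgebra k (Fin n × Fin n) → Prop
  | col {i l j : Fin n} (h : i < l) :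
      Rel (FreeAlgebra.ι k (i, j) * FreeAlgebra.ι k (l, j))
        (q • (FreeAlgebra.ι k (l, j) * FreeAlgebra.ι k (i, j)))
  | row {i j m : Fin n} (h : j < m) :
      Rel (FreeAlgebra.ι k (i, j) * FreeAlgebra.ι k (i, m))
        (q • (FreeAlgebra.ι k (i, m) * FreeAlgebra.ι k (i, j)))
  | swap {i j l m : Fin n} (h1 : i < l) (h2 : m < j) :
      Rel (FreeAlgebra.ι k (i, j) * FreeAlgebra.ι k (l, m))
        (FreeAlgebra.ι k (l, m) * FreeAlgebra.ι k (i, j))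
  | mixed {i j l m : Fin n} (h1 : i < l) (h2 : j < m) :
      Rel (FreeAlgebra.ι k (i, j) * FreeAlgebra.ι k (l, m))
        (FreeAlgebra.ι k (l, m) * FreeAlgebra.ι k (i, j)
          + (q - q⁻¹) • (FreeAlgebra.ι k (i, m) * FreeAlgebra.ι k (l, j)))

/-- The quantized coordinate ring `A = O_q(M_n(k))`. -/
abbrev A : Type _ := RingQuot (Rel k n q)

/-- The generator `X_{ij}` of `O_q(M_n(k))`. -/
def X (i j : Fin n) : A k n q :=
  RingQuot.mkAlgHom k (Rel k n q) (FreeAlgebra.ι k (i, j))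

/-- The number of inversions `ℓ(σ)` of a permutation of `Fin t`. -/
def inversions {t : ℕ} (σ : Equiv.Perm (Fin t)) : ℕ :=
  (Finset.univ.filter fun p : Fin t × Fin t => p.1 < p.2 ∧ σ p.2 < σ p.1).card

/-- The quantum minor `[I|J]` (with junk value `0` when `|I| ≠ |J|`). -/
def qMinor (I J : Finset (Fin n)) : A k n q :=
  if h : I.card = J.card then
    ∑ σ : Equiv.Perm (Fin I.card),
      ((-q) ^ inversions σ) •
        (List.ofFn fun l : Fin I.card =>
          X k n q (↑((I.orderIsoOfFin rfl) (σ l))) (↑((J.orderIsoOfFin h.symm) l))).prod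
  else 0

/-- `ℓ(S;T) = #{(s,t) ∈ S×T : s > t}`. -/
def ell (S T : Finset (Fin n)) : ℕ :=
  ((S ×ˢ T).filter fun p => p.2 < p.1).card

/-- The `(-q)`-integer `[d]_{-q} = (-q)^{d-1} + (-q)^{d-3} + ⋯ + (-q)^{-(d-1)}`. -/
def negqInt (d : ℕ) : k :=
  ∑ s ∈ Finset.range d, (-q) ^ ((d : ℤ) - 1 - 2 * (s : ℤ))

/-- `ξ_q(I;J) = [d₁]_{-q}⋯[d_m]_{-q}` where `d_l = |[1,r_l] ∩ J| - l + 1` for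
`I = {r₁ < ⋯ < r_m}` (with junk value `1` when `|I| ≠ |J|`). -/
def xiq (I J : Finset (Fin n)) : k :=
  if _h : I.card = J.card then
    ∏ l : Fin I.card,
      negqInt k q
        ((J.filter fun x => x ≤ (↑((I.orderIsoOfFin rfl) l) : Fin n)).card - (l : ℕ))
  else 1

/-- The componentwise order `I ≤ J` on index sets of the same cardinality:
writing `I = {i₁ < ⋯ < i_t}` and `J = {j₁ < ⋯ < j_t}`, we require `i_l ≤ j_l` for all `l`. -/
def setLE (I J : Finset (Fin n)) : Prop :=
  I.card = J.card ∧
    ∀ (h : I.card = J.card) (l : Fin I.card),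
      (↑((I.orderIsoOfFin rfl) l) : Fin n) ≤ (↑((J.orderIsoOfFin h.symm) l) : Fin n)

/-- `S^♮ = (X ∩ Y) ⊔ ((X ∪ Y) ∖ S)` relative to the pair `(X, Y)`. -/
def snat (X Y S : Finset (Fin n)) : Finset (Fin n) :=
  (X ∩ Y) ∪ ((X ∪ Y) \ S)

/-- `S_≤(X,Y) = {S ⊆ X ∪ Y : X ∩ Y ⊆ S, |S| = |X|, S ≤ X}`. -/
def sLE (X Y : Finset (Fin n)) : Finset (Finset (Fin n)) :=
  (X ∪ Y).powerset.filter fun S => X ∩ Y ⊆ S ∧ S.card = X.card ∧ setLE n S X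

/-- `S_<(X,Y) = {S ⊆ X ∪ Y : X ∩ Y ⊆ S, |S| = |X|, S < X}`. -/
def sLT (X Y : Finset (Fin n)) : Finset (Finset (Fin n)) :=
  (sLE n X Y).filter fun S => S ≠ X

/-- `S_≥(X,Y) = {T ⊆ X ∪ Y : X ∩ Y ⊆ T, |T| = |X|, T ≥ X}`. -/
def sGE (X Y : Finset (Fin n)) : Finset (Finset (Fin n)) :=
  (X ∪ Y).powerset.filter fun T => X ∩ Y ⊆ T ∧ T.card = X.card ∧ setLE n X T

/-- `S_>(X,Y) = {T ⊆ X ∪ Y : X ∩ Y ⊆ T, |T| = |X|, T > X}`. -/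
def sGT (X Y : Finset (Fin n)) : Finset (Finset (Fin n)) :=
  (sGE n X Y).filter fun T => T ≠ X

/-- `L(S,X,Y) = ℓ((S∖S^♮)∪(Y∖X); X∖S) − ℓ((S∖S^♮)∪(Y∖X); S∖X)`. -/
def Lfun (S X Y : Finset (Fin n)) : ℤ :=
  (ell n ((S \ snat n X Y S) ∪ (Y \ X)) (X \ S) : ℤ)
    - (ell n ((S \ snat n X Y S) ∪ (Y \ X)) (S \ X) : ℤ)

/-- `L^♮(T,X,Y) = ℓ((T^♮∖T)∪(X∖Y); T∖X) − ℓ((T^♮∖T)∪(X∖Y); X∖T)`. -/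
def Lnat (T X Y : Finset (Fin n)) : ℤ :=
  (ell n ((snat n X Y T \ T) ∪ (X \ Y)) (T \ X) : ℤ)
    - (ell n ((snat n X Y T \ T) ∪ (X \ Y)) (X \ T) : ℤ)

/-- The form `A ⊗ A → k` given on pure tensors by `x ⊗ y ↦ f(x) g(y)`. -/
def biform (f g : A k n q →ₗ[k] k) : (A k n q ⊗[k] A k n q) →ₗ[k] k :=
  (TensorProduct.lid k k).toLinearMap ∘ₗ TensorProduct.map f g

/-- Opposite multiplication `A ⊗ A → A`, `x ⊗ y ↦ y * x`. -/
def mulRev : (A k n q ⊗[k] A k n q) →ₗ[k] A k n q :=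
  (LinearMap.mul' k (A k n q)) ∘ₗ (TensorProduct.comm k (A k n q) (A k n q)).toLinearMap

/-- `Σ (a₁ ⊗ b₁) ⊗ (a₂ ⊗ b₂)`, the regrouped double Sweedler decomposition of `a` and `b`. -/
def sweedler2 (Δ : A k n q →ₐ[k] A k n q ⊗[k] A k n q) (a b : A k n q) :
    (A k n q ⊗[k] A k n q) ⊗[k] (A k n q ⊗[k] A k n q) :=
  (TensorProduct.tensorTensorTensorComm k (A k n q) (A k n q) (A k n q) (A k n q))
    (Δ a ⊗ₜ[k] Δ b)

/-- `Δ` is the standard comultiplication: `Δ(X_{ij}) = Σ_l X_{il} ⊗ X_{lj}`. -/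
def IsComul (Δ : A k n q →ₐ[k] A k n q ⊗[k] A k n q) : Prop :=
  ∀ i j : Fin n, Δ (X k n q i j) = ∑ l : Fin n, X k n q i l ⊗ₜ[k] X k n q l j

/-- `ε` is the standard counit: `ε(X_{ij}) = δ_{ij}`. -/
def IsCounit (ε : A k n q →ₐ[k] k) : Prop :=
  ∀ i j : Fin n, ε (X k n q i j) = if i = j then 1 else 0

/-- The bilinear form `r` satisfies the coquasitriangularity conditions (1.7)(i)-(iv)
together with the prescribed values (1.9) on the generators. -/
def IsRForm (Δ : A k n q →ₐ[k] A k n q ⊗[k] A k n q) (ε : A k n q →ₐ[k] k)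
    (r : A k n q →ₗ[k] A k n q →ₗ[k] k) : Prop :=
  -- (i) `Σ r(a₁,b₁) a₂ b₂ = Σ r(a₂,b₂) b₁ a₁`
  (∀ a b : A k n q,
      (TensorProduct.lid k (A k n q))
          ((TensorProduct.map (TensorProduct.lift r) (LinearMap.mul' k (A k n q)))
            (sweedler2 k n q Δ a b)) =
        (TensorProduct.rid k (A k n q))
          ((TensorProduct.map (mulRev k n q) (TensorProduct.lift r))
            (sweedler2 k n q Δ a b))) ∧
  -- (ii) `r(ab, c) = Σ r(a,c₁) r(b,c₂)`
  (∀ a b c : A k n q, r (a * b) c = biform k n q (r a) (r b) (Δ c)) ∧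
  -- (iii) `r(a, bc) = Σ r(a₁,c) r(a₂,b)`
  (∀ a b c : A k n q, r a (b * c) = biform k n q (r.flip c) (r.flip b) (Δ a)) ∧
  -- (iv) `r(a,1) = r(1,a) = ε(a)`
  (∀ a : A k n q, r a 1 = ε a ∧ r 1 a = ε a) ∧
  -- values on generators
  (∀ i j l m : Fin n,
      r (X k n q i j) (X k n q l m) =
        if i = j ∧ l = m ∧ i = l then q
        else if i = j ∧ l = m then 1
        else if l = j ∧ m = i ∧ j < i then q - q⁻¹
        else 0)

/-- `Σ f(a₁,b₁) g(a₂,b₂)`, the convolution-type pairing of two bilinear forms. -/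
def convPair (Δ : A k n q →ₐ[k] A k n q ⊗[k] A k n q)
    (f g : A k n q →ₗ[k] A k n q →ₗ[k] k) (a b : A k n q) : k :=
  (TensorProduct.lid k k)
    ((TensorProduct.map (TensorProduct.lift f) (TensorProduct.lift g))
      (sweedler2 k n q Δ a b))

end QMat

open QMat

/-! ### Laplace expansion of a quantum minor along its last column -/

/-- The quantum minor attached to arbitrary families of row indices `f` and column indices `g`;
indexing by functions rather than by sets avoids transport along equalities of cardinalities. -/
def famMinor (k : Type*) [Field k] (n : ℕ) (q : k) (t : ℕ) (f g : Fin t → Fin n) : A k n q :=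
  ∑ σ : Equiv.Perm (Fin t),
    ((-q) ^ inversions σ) • (List.ofFn fun l : Fin t => X k n q (f (σ l)) (g l)).prod

lemma qMinor_eq_famMinor {k : Type*} [Field k] {n : ℕ} {q : k} {t : ℕ} {I J : Finset (Fin n)}
    {f g : Fin t → Fin n} (hI : I.card = t) (hJ : J.card = t)
    (hf : StrictMono f) (hg : StrictMono g) (hfI : ∀ a, f a ∈ I) (hgJ : ∀ a, g a ∈ J) :
    qMinor k n q I J = famMinor k n q t f g := by
  subst hI
  have hf' := Finset.orderEmbOfFin_unique rfl hfI hf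
  have hg' := Finset.orderEmbOfFin_unique hJ hgJ hg
  rw [qMinor, dif_pos hJ.symm, famMinor]
  simp only [Finset.coe_orderIsoOfFin_apply, hf', hg']

/-- The permutation of `Fin (t + 1)` which sends the last index to `p` and acts on the other
indices as `τ`, the values being shifted so as to avoid `p`. -/
def extendPerm {t : ℕ} (p : Fin (t + 1)) (τ : Equiv.Perm (Fin t)) : Equiv.Perm (Fin (t + 1)) :=
  ((finSuccEquiv' (Fin.last t)).trans (Equiv.optionCongr τ)).trans (finSuccEquiv' p).symm

lemma extendPerm_last {t : ℕ} (p : Fin (t + 1)) (τ : Equiv.Perm (Fin t)) :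
    extendPerm p τ (Fin.last t) = p := by
  simp [extendPerm]

lemma extendPerm_castSucc {t : ℕ} (p : Fin (t + 1)) (τ : Equiv.Perm (Fin t)) (a : Fin t) :
    extendPerm p τ a.castSucc = p.succAbove (τ a) := by
  have h : (finSuccEquiv' (Fin.last t)) a.castSucc = some a := by
    rw [← Fin.succAbove_last_apply, finSuccEquiv'_succAbove]
  simp [extendPerm, h]

lemma extendPerm_bijective (t : ℕ) :
    Function.Bijective fun x : Fin (t + 1) × Equiv.Perm (Fin t) => extendPerm x.1 x.2 := by
  rw [Fintype.bijective_iff_injective_and_card]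
  constructor
  · rintro ⟨p, τ⟩ ⟨p', τ'⟩ h
    have hp : p = p' := by
      have := congrArg (fun σ : Equiv.Perm (Fin (t + 1)) => σ (Fin.last t)) h
      simpa [extendPerm_last] using this
    subst hp
    have hτ : τ = τ' := by
      ext1 a
      have := congrArg (fun σ : Equiv.Perm (Fin (t + 1)) => σ a.castSucc) h
      simpa [extendPerm_castSucc] using this
    rw [hτ]
  · simp [Fintype.card_perm, Nat.factorial_succ]

/-- The inversions of `extendPerm p τ` are those of `τ`, together with the pairs involving the
last index, one for each value exceeding `p`. -/
lemma inversions_extendPerm {t : ℕ} (p : Fin (t + 1)) (τ : Equiv.Perm (Fin t)) :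
    inversions (extendPerm p τ) =
      (Finset.univ.filter fun c : Fin t => p < p.succAbove c).card + inversions τ := by
  simp only [inversions, Finset.card_filter, Fintype.sum_prod_type]
  rw [Fin.sum_univ_castSucc]
  simp only [Fin.sum_univ_castSucc, extendPerm_castSucc, extendPerm_last, Fin.castSucc_lt_last,
    Fin.castSucc_lt_castSucc_iff, Fin.succAbove_lt_succAbove_iff, true_and, lt_irrefl, false_and,
    not_lt_of_gt (Fin.castSucc_lt_last _), if_false, Finset.sum_const_zero, add_zero,
    Finset.sum_add_distrib]
  rw [add_comm, Equiv.sum_comp τ (fun c => if p < p.succAbove c then 1 else 0)]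

lemma famMinor_succ (k : Type*) [Field k] (n : ℕ) (q : k) (t : ℕ) (f g : Fin (t + 1) → Fin n) :
    famMinor k n q (t + 1) f g =
      ∑ p : Fin (t + 1), ((-q) ^ (Finset.univ.filter fun c : Fin t => p < p.succAbove c).card) •
        (famMinor k n q t (fun a => f (p.succAbove a)) (fun a => g a.castSucc) *
          X k n q (f p) (g (Fin.last t))) := by
  rw [famMinor, ← Fintype.sum_bijective _ (extendPerm_bijective t) _ _ (fun _ => rfl),
    Fintype.sum_prod_type]
  refine Finset.sum_congr rfl fun p _ => ?_
  rw [famMinor, Finset.sum_mul, Finset.smul_sum]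
  refine Finset.sum_congr rfl fun τ _ => ?_
  rw [inversions_extendPerm, List.ofFn_succ', List.concat_eq_append, List.prod_append, pow_add,
    smul_mul_assoc, smul_smul]
  simp [extendPerm_castSucc, extendPerm_last]

/-- Laplace expansion along the column indexed by the largest element `M` of `J`. -/
lemma qMinor_laplace {k : Type*} [Field k] {n : ℕ} {q : k} {I J : Finset (Fin n)}
    (hIJ : I.card = J.card) {M : Fin n} (hM : M ∈ J) (hmax : ∀ x ∈ J, x ≤ M) :
    qMinor k n q I J = ∑ l ∈ I, ((-q) ^ (I.filter fun x => l < x).card) •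
      (qMinor k n q (I.erase l) (J.erase M) * X k n q l M) := by
  obtain ⟨t, ht⟩ : ∃ t, J.card = t + 1 :=
    ⟨J.card - 1, by have := Finset.card_pos.mpr ⟨M, hM⟩; omega⟩
  have hI : I.card = t + 1 := hIJ.trans ht
  set f := I.orderEmbOfFin hI with hf
  set g := J.orderEmbOfFin ht with hg
  have hfI : ∀ a, f a ∈ I := fun a => Finset.orderEmbOfFin_mem I hI a
  have hgJ : ∀ a, g a ∈ J := fun a => Finset.orderEmbOfFin_mem J ht a
  have hgM : g (Fin.last t) = M := by
    apply le_antisymm (hmax _ (hgJ _))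
    have : M ∈ Set.range g := by rw [hg, Finset.range_orderEmbOfFin]; exact hM
    obtain ⟨a, rfl⟩ := this
    exact g.monotone (Fin.le_last a)
  have himg : Finset.univ.map f.toEmbedding = I := by
    apply Finset.coe_injective
    rw [Finset.coe_map, Finset.coe_univ, Set.image_univ]
    exact Finset.range_orderEmbOfFin I hI
  have key : ∀ F : Fin n → A k n q, ∑ l ∈ I, F l = ∑ p, F (f p) := by
    intro F
    conv_lhs => rw [← himg, Finset.sum_map]
    rfl
  rw [qMinor_eq_famMinor hI ht f.strictMono g.strictMono hfI hgJ, famMinor_succ, key]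
  refine Finset.sum_congr rfl fun p _ => ?_
  rw [hgM]
  congr 2
  · refine Finset.card_bij (fun c _ => f (p.succAbove c)) ?_ ?_ ?_
    · intro c hc
      simp only [Finset.mem_filter, Finset.mem_univ, true_and] at hc
      simp [hfI, hc]
    · intro c _ c' _ h
      exact Fin.succAbove_right_injective (f.injective h)
    · intro x hx
      rw [Finset.mem_filter] at hx
      obtain ⟨hxI, hlt⟩ := hx
      have : x ∈ Set.range f := by rw [hf, Finset.range_orderEmbOfFin]; exact hxI
      obtain ⟨a, rfl⟩ := this
      obtain ⟨c, rfl⟩ := Fin.exists_succAbove_eq (f.injective.ne_iff.mp hlt.ne')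
      exact ⟨c, by simpa using hlt, rfl⟩
  · symm
    apply qMinor_eq_famMinor
    · rw [Finset.card_erase_of_mem (hfI p), hI]; rfl
    · rw [Finset.card_erase_of_mem hM, ht]; rfl
    · exact f.strictMono.comp (Fin.strictMono_succAbove p)
    · exact g.strictMono.comp Fin.strictMono_castSucc
    · intro a
      exact Finset.mem_erase.mpr ⟨f.injective.ne (Fin.succAbove_ne p a), hfI _⟩
    · intro a
      exact Finset.mem_erase.mpr
        ⟨by rw [← hgM]; exact g.injective.ne (Fin.castSucc_lt_last a).ne, hgJ _⟩

/-! ### The pairing of a generator with a product -/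

section pairing

variable {k : Type*} [Field k] {n : ℕ} {q : k} {Δ : A k n q →ₐ[k] A k n q ⊗[k] A k n q}
  {ε : A k n q →ₐ[k] k} {r : A k n q →ₗ[k] A k n q →ₗ[k] k}

/-- The matrices `(r(X_{ij}, b))_{ij}` multiply contravariantly in `b`. -/
lemma r_X_mul (hΔ : IsComul k n q Δ) (hr : IsRForm k n q Δ ε r) (i j : Fin n) (b c : A k n q) :
    r (X k n q i j) (b * c) = ∑ s, r (X k n q i s) c * r (X k n q s j) b := by
  rw [hr.2.2.1, hΔ]
  simp [biform]

lemma r_X_mul_X (hΔ : IsComul k n q Δ) (hr : IsRForm k n q Δ ε r) (i j l M : Fin n)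
    (b : A k n q) :
    r (X k n q i j) (b * X k n q l M) =
      (if l = M then (if i = M then q else 1) * r (X k n q i j) b else 0) +
        (if i = M ∧ l < M then (q - q⁻¹) * r (X k n q l j) b else 0) := by
  rw [r_X_mul hΔ hr]
  simp only [hr.2.2.2.2]
  rcases eq_or_ne l M with rfl | hlM
  · rw [Finset.sum_eq_single i]
    · by_cases h : i = l <;> simp [h]
    · intro s _ hs
      rw [if_neg (by tauto), if_neg (by tauto), if_neg, zero_mul]
      rintro ⟨rfl, rfl, h⟩
      exact lt_irrefl _ h
    · simp
  · rw [Finset.sum_eq_single l]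
    · by_cases h : i = M
      · subst h; simp [hlM]
      · have h' : M ≠ i := Ne.symm h
        simp [h, h', hlM]
    · intro s _ hs
      rw [if_neg (by tauto), if_neg (by tauto), if_neg (by tauto), zero_mul]
    · simp

/-- The recursion for `r(X_{ij}, [I|J])` coming from the Laplace expansion along the largest
column index `M`. -/
lemma r_X_qMinor (hΔ : IsComul k n q Δ) (hr : IsRForm k n q Δ ε r) (i j : Fin n)
    {I J : Finset (Fin n)} (hIJ : I.card = J.card) {M : Fin n} (hM : M ∈ J)
    (hmax : ∀ x ∈ J, x ≤ M) :
    r (X k n q i j) (qMinor k n q I J) =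
      (if M ∈ I then (-q) ^ (I.filter fun x => M < x).card * ((if i = M then q else 1) *
        r (X k n q i j) (qMinor k n q (I.erase M) (J.erase M))) else 0) +
      (if i = M then ∑ l ∈ I.filter fun l => l < M, (-q) ^ (I.filter fun x => l < x).card *
        ((q - q⁻¹) * r (X k n q l j) (qMinor k n q (I.erase l) (J.erase M))) else 0) := by
  rw [qMinor_laplace hIJ hM hmax, map_sum]
  simp only [map_smul, r_X_mul_X hΔ hr, smul_eq_mul, mul_add, Finset.sum_add_distrib, mul_ite,
    mul_zero]
  congr 1
  · rw [Finset.sum_ite_eq']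
  · by_cases h : i = M
    · simp [h, Finset.sum_filter]
    · simp [h]

end pairing

/-! ### The closed formula -/

/-- The telescoping sum behind the closed formula: with `x = -q`, the sum over the first
intermediate index of a path collapses to a single power. -/
lemma telescope {k : Type*} [Field k] {α : Type*} [LinearOrder α] {x : k} (hx : x ≠ 0)
    (S : Finset α) :
    x ^ S.card - (x - x⁻¹) * ∑ l ∈ S, x ^ (S.filter fun y => l < y).card *
      x ^ (-((S.filter fun y => y < l).card : ℤ)) = x ^ (-(S.card : ℤ)) := by
  induction S using Finset.induction_on_max with
  | empty => simp
  | insert a S ha ih =>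
    have haS : a ∉ S := fun h => lt_irrefl _ (ha a h)
    have h1 : ((insert a S).filter fun y => a < y) = ∅ := by
      rw [Finset.filter_eq_empty_iff]
      intro y hy
      rcases Finset.mem_insert.mp hy with rfl | hy
      · exact lt_irrefl _
      · exact not_lt_of_gt (ha y hy)
    have h2 : ((insert a S).filter fun y => y < a) = S := by
      ext y
      simp only [Finset.mem_filter, Finset.mem_insert]
      constructor
      · rintro ⟨rfl | h, h'⟩
        · exact absurd h' (lt_irrefl _)
        · exact h
      · exact fun h => ⟨Or.inr h, ha y h⟩
    have h3 : ∀ l ∈ S, ((insert a S).filter fun y => l < y).card =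
        (S.filter fun y => l < y).card + 1 := by
      intro l hl
      rw [Finset.filter_insert, if_pos (ha l hl), Finset.card_insert_of_notMem (by simp [haS])]
    have h4 : ∀ l ∈ S, ((insert a S).filter fun y => y < l) = S.filter fun y => y < l := by
      intro l hl
      rw [Finset.filter_insert, if_neg (not_lt_of_gt (ha l hl))]
    have h5 : ∑ l ∈ S, x ^ ((insert a S).filter fun y => l < y).card *
        x ^ (-(((insert a S).filter fun y => y < l).card : ℤ)) =
        x * ∑ l ∈ S, x ^ (S.filter fun y => l < y).card *
          x ^ (-((S.filter fun y => y < l).card : ℤ)) := by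
      rw [Finset.mul_sum]
      refine Finset.sum_congr rfl fun l hl => ?_
      rw [h3 l hl, h4 l hl]
      ring
    rw [Finset.sum_insert haS, h5, h1, h2, Finset.card_insert_of_notMem haS]
    have h6 : x ^ (-((S.card + 1 : ℕ) : ℤ)) = x ^ (-(S.card : ℤ)) * x⁻¹ := by
      rw [← zpow_sub_one₀ hx]; congr 1; push_cast; ring
    rw [h6]
    simp only [Finset.card_empty, pow_zero, one_mul]
    linear_combination x * ih

/-- The value of `r(X_{ij}, [I|J])` for all `i, j`; the diagonal case `i = j` and the vanishing
for `i < j` are included because the induction on `|I|` needs them. -/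
def pairVal {k : Type*} [Field k] {n : ℕ} (q : k) (i j : Fin n) (I J : Finset (Fin n)) : k :=
  if i = j then (if I = J then (if i ∈ I then q else 1) else 0)
  else if j < i ∧ i ∈ J ∧ j ∈ I ∧ I.erase j = J.erase i then
    (q - q⁻¹) * (-q) ^ (-((((I ∩ J).filter fun x => j < x ∧ x < i).card : ℤ)))
  else 0

/-- The sum in the recursion when `i` is the largest column index, for `j < i`. -/
lemma sum_pairVal {k : Type*} [Field k] {n : ℕ} {q : k} (hq : q ≠ 0) {j M : Fin n}
    (hjM : j < M) {I J : Finset (Fin n)} (hM : M ∈ J) (hmax : ∀ x ∈ J, x ≤ M) :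
    ∑ l ∈ I.filter (fun l => l < M), (-q) ^ (I.filter fun x => l < x).card *
        ((q - q⁻¹) * pairVal q l j (I.erase l) (J.erase M)) = pairVal q M j I J := by
  rw [pairVal, if_neg hjM.ne']
  by_cases h : j ∈ I ∧ I.erase j = J.erase M
  · obtain ⟨hjI, hK⟩ := h
    rw [if_pos ⟨hjM, hM, hjI, hK⟩]
    have hIM : ∀ x ∈ I, x < M := by
      intro x hx
      rcases eq_or_ne x j with rfl | hxj
      · exact hjM
      · have : x ∈ J.erase M := by rw [← hK]; exact Finset.mem_erase.mpr ⟨hxj, hx⟩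
        rw [Finset.mem_erase] at this
        exact lt_of_le_of_ne (hmax x this.2) this.1
    have hIJ : ∀ x, x ≠ j → (x ∈ I ↔ x ∈ J ∧ x ≠ M) := by
      intro x hx
      have := Finset.ext_iff.mp hK x
      simp only [Finset.mem_erase] at this
      tauto
    set S := I.filter fun x => j < x with hS
    have e1 : ((I ∩ J).filter fun x => j < x ∧ x < M) = S := by
      ext x
      simp only [hS, Finset.mem_filter, Finset.mem_inter]
      constructor
      · tauto
      · rintro ⟨h1, h2⟩
        exact ⟨⟨h1, ((hIJ x h2.ne').mp h1).1⟩, h2, hIM x h1⟩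
    have e2 : I.filter (fun l => l < M) = I := Finset.filter_true_of_mem hIM
    rw [e1, e2]
    -- only `l = j` and the elements `l > j` of `I` contribute
    rw [← telescope (neg_ne_zero.mpr hq) S, ← Finset.add_sum_erase I _ hjI]
    have e3 : pairVal q j j (I.erase j) (J.erase M) = 1 := by
      rw [pairVal, if_pos rfl, if_pos hK, if_neg (Finset.notMem_erase j I)]
    have e4 : ∑ l ∈ I.erase j, (-q) ^ (I.filter fun x => l < x).card *
        ((q - q⁻¹) * pairVal q l j (I.erase l) (J.erase M)) =
        ∑ l ∈ S, (q - q⁻¹) * ((q - q⁻¹) * ((-q) ^ (S.filter fun y => l < y).card *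
          (-q) ^ (-((S.filter fun y => y < l).card : ℤ)))) := by
      have hsub : S ⊆ I.erase j := by
        intro x hx
        rw [hS, Finset.mem_filter] at hx
        exact Finset.mem_erase.mpr ⟨hx.2.ne', hx.1⟩
      symm
      apply Finset.sum_subset_zero_on_sdiff hsub
      · intro l hl
        rw [Finset.mem_sdiff, Finset.mem_erase, hS, Finset.mem_filter] at hl
        have hlj : ¬ j < l := fun h => hl.2 ⟨hl.1.2, h⟩
        rw [pairVal, if_neg hl.1.1, if_neg (fun h => hlj h.1)]
        simp
      · intro l hl
        rw [hS, Finset.mem_filter] at hl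
        obtain ⟨hlI, hjl⟩ := hl
        have c1 : (I.filter fun x => l < x) = S.filter fun y => l < y := by
          ext x
          simp only [hS, Finset.mem_filter]
          constructor
          · exact fun h => ⟨⟨h.1, hjl.trans h.2⟩, h.2⟩
          · exact fun h => ⟨h.1.1, h.2⟩
        have c2 : (((I.erase l) ∩ (J.erase M)).filter fun x => j < x ∧ x < l) =
            S.filter fun y => y < l := by
          ext x
          simp only [hS, Finset.mem_filter, Finset.mem_inter, Finset.mem_erase]
          constructor
          · rintro ⟨⟨⟨_, h1⟩, _⟩, h2, h3⟩
            exact ⟨⟨h1, h2⟩, h3⟩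
          · rintro ⟨⟨h1, h2⟩, h3⟩
            have := (hIJ x h2.ne').mp h1
            exact ⟨⟨⟨h3.ne, h1⟩, this.2, this.1⟩, h2, h3⟩
        have c3 : j < l ∧ l ∈ J.erase M ∧ j ∈ I.erase l ∧
            (I.erase l).erase j = (J.erase M).erase l := by
          refine ⟨hjl, ?_, Finset.mem_erase.mpr ⟨hjl.ne, hjI⟩, ?_⟩
          · rw [← hK]; exact Finset.mem_erase.mpr ⟨hjl.ne', hlI⟩
          · rw [Finset.erase_right_comm, hK]
        rw [pairVal, if_neg hjl.ne', if_pos c3, c1, c2]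
        ring
    rw [e3, e4, ← Finset.mul_sum, ← Finset.mul_sum]
    have : (-q)⁻¹ = -q⁻¹ := inv_neg
    rw [this]
    ring
  · rw [if_neg (by tauto)]
    refine Finset.sum_eq_zero fun l hl => ?_
    rw [Finset.mem_filter] at hl
    have : pairVal q l j (I.erase l) (J.erase M) = 0 := by
      rw [pairVal]
      split_ifs with h1 h2 h3 h4
      · subst h1; exact absurd ⟨hl.1, h2⟩ h
      · subst h1; exact absurd ⟨hl.1, h2⟩ h
      · rfl
      · exfalso
        obtain ⟨hjl, hlJ, hjI, hE⟩ := h4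
        refine h ⟨Finset.mem_of_mem_erase hjI, ?_⟩
        rw [Finset.erase_right_comm] at hE
        rw [← Finset.insert_erase hlJ, ← hE, Finset.insert_erase]
        exact Finset.mem_erase.mpr ⟨hjl.ne', hl.1⟩
      · rfl
    rw [this]; ring

/-- Away from the row `M`, the largest column index may be removed from both index sets. -/
lemma pairVal_erase {k : Type*} [Field k] {n : ℕ} {q : k} {i j M : Fin n} (hi : i ≠ M)
    {I J : Finset (Fin n)} (hM : M ∈ J) (hmax : ∀ x ∈ J, x ≤ M) :
    (if M ∈ I then (-q) ^ (I.filter fun x => M < x).card *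
      pairVal q i j (I.erase M) (J.erase M) else 0) = pairVal q i j I J := by
  by_cases hMI : M ∈ I
  · rw [if_pos hMI]
    rw [pairVal, pairVal]
    have hEq : I.erase M = J.erase M ↔ I = J := by
      constructor
      · intro h; rw [← Finset.insert_erase hMI, h, Finset.insert_erase hM]
      · rintro rfl; rfl
    by_cases hij : i = j
    · rw [if_pos hij, if_pos hij]
      by_cases hIJ : I = J
      · subst hIJ
        have : I.filter (fun x => M < x) = ∅ :=
          Finset.filter_eq_empty_iff.mpr fun x hx => not_lt_of_ge (hmax x hx)
        simp [this, hi]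
      · rw [if_neg (fun h => hIJ (hEq.mp h)), if_neg hIJ, mul_zero]
    · rw [if_neg hij, if_neg hij]
      have hC : (j < i ∧ i ∈ J.erase M ∧ j ∈ I.erase M ∧
          (I.erase M).erase j = (J.erase M).erase i) ↔
          (j < i ∧ i ∈ J ∧ j ∈ I ∧ I.erase j = J.erase i) := by
        constructor
        · rintro ⟨h1, h2, h3, h4⟩
          rw [Finset.mem_erase] at h2 h3
          refine ⟨h1, h2.2, h3.2, ?_⟩
          rw [Finset.erase_right_comm, Finset.erase_right_comm (s := J)] at h4
          rw [← Finset.insert_erase (Finset.mem_erase.mpr ⟨h3.1.symm, hMI⟩), h4,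
            Finset.insert_erase (Finset.mem_erase.mpr ⟨h2.1.symm, hM⟩)]
        · rintro ⟨h1, h2, h3, h4⟩
          have hiM := hmax i h2
          refine ⟨h1, Finset.mem_erase.mpr ⟨hi, h2⟩,
            Finset.mem_erase.mpr ⟨(h1.trans_le hiM).ne, h3⟩, ?_⟩
          rw [Finset.erase_right_comm, h4, Finset.erase_right_comm]
      by_cases h : j < i ∧ i ∈ J ∧ j ∈ I ∧ I.erase j = J.erase i
      · rw [if_pos h, if_pos (hC.mpr h)]
        obtain ⟨h1, h2, h3, h4⟩ := h
        have hiM : i < M := lt_of_le_of_ne (hmax i h2) hi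
        have e1 : I.filter (fun x => M < x) = ∅ := by
          refine Finset.filter_eq_empty_iff.mpr fun x hx hlt => ?_
          have : x ∈ J.erase i := by
            rw [← h4]
            exact Finset.mem_erase.mpr ⟨(h1.trans (hiM.trans hlt)).ne', hx⟩
          exact absurd (hmax x (Finset.mem_of_mem_erase this)) (not_le_of_gt hlt)
        have e2 : ((I.erase M ∩ J.erase M).filter fun x => j < x ∧ x < i) =
            (I ∩ J).filter fun x => j < x ∧ x < i := by
          ext x
          simp only [Finset.mem_filter, Finset.mem_inter, Finset.mem_erase]
          constructor
          · tauto
          · rintro ⟨h5, h6, h7⟩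
            have := (h7.trans hiM).ne
            tauto
        rw [e1, e2]; simp
      · rw [if_neg h, if_neg (fun h' => h (hC.mp h')), mul_zero]
  · rw [if_neg hMI, pairVal]
    split_ifs with h1 h2 h3 h4
    · exact absurd (h2 ▸ hM) hMI
    · exact absurd (h2 ▸ hM) hMI
    · rfl
    · exfalso
      have : M ∈ I.erase j := by
        rw [h4.2.2.2]; exact Finset.mem_erase.mpr ⟨hi.symm, hM⟩
      exact hMI (Finset.mem_of_mem_erase this)
    · rfl

lemma r_X_qMinor_eq {k : Type*} [Field k] {n : ℕ} {q : k} (hq : q ≠ 0)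
    {Δ : A k n q →ₐ[k] A k n q ⊗[k] A k n q} {ε : A k n q →ₐ[k] k}
    (hΔ : IsComul k n q Δ) (hε : IsCounit k n q ε)
    {r : A k n q →ₗ[k] A k n q →ₗ[k] k} (hr : IsRForm k n q Δ ε r) (t : ℕ) :
    ∀ (I J : Finset (Fin n)), I.card = t → J.card = t → ∀ i j : Fin n,
      r (X k n q i j) (qMinor k n q I J) = pairVal q i j I J := by
  induction t with
  | zero =>
    intro I J hI hJ i j
    rw [Finset.card_eq_zero] at hI hJ
    subst hI hJ
    have h1 : qMinor k n q ∅ ∅ = 1 := by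
      rw [qMinor_eq_famMinor (t := 0) (f := Fin.elim0) (g := Fin.elim0) rfl rfl
        (fun a => a.elim0) (fun a => a.elim0) (fun a => a.elim0) (fun a => a.elim0)]
      simp [famMinor, inversions]
    rw [h1, (hr.2.2.2.1 _).1, hε]
    simp [pairVal]
  | succ t ih =>
    intro I J hI hJ i j
    have hne : J.Nonempty := by rw [← Finset.card_pos]; omega
    obtain ⟨M, hM, hmax⟩ : ∃ M ∈ J, ∀ x ∈ J, x ≤ M :=
      ⟨J.max' hne, J.max'_mem hne, fun x hx => J.le_max' x hx⟩
    have hJM : (J.erase M).card = t := by rw [Finset.card_erase_of_mem hM, hJ]; rfl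
    have hIl : ∀ l ∈ I, (I.erase l).card = t := fun l hl => by
      rw [Finset.card_erase_of_mem hl, hI]; rfl
    rw [r_X_qMinor hΔ hr i j (hI.trans hJ.symm) hM hmax]
    have e1 : ∀ c d : k, (if M ∈ I then c * (d *
        r (X k n q i j) (qMinor k n q (I.erase M) (J.erase M))) else 0) =
        if M ∈ I then c * (d * pairVal q i j (I.erase M) (J.erase M)) else 0 := by
      intro c d
      split_ifs with h
      · rw [ih _ _ (hIl M h) hJM]
      · rfl
    have e2 : ∑ l ∈ I.filter (fun l => l < M), (-q) ^ (I.filter fun x => l < x).card *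
          ((q - q⁻¹) * r (X k n q l j) (qMinor k n q (I.erase l) (J.erase M))) =
        ∑ l ∈ I.filter (fun l => l < M), (-q) ^ (I.filter fun x => l < x).card *
          ((q - q⁻¹) * pairVal q l j (I.erase l) (J.erase M)) := by
      refine Finset.sum_congr rfl fun l hl => ?_
      rw [ih _ _ (hIl l (Finset.mem_filter.mp hl).1) hJM]
    rw [e1, e2]
    by_cases hi : i = M
    · subst hi
      rw [if_pos rfl, if_pos rfl]
      rcases lt_trichotomy j i with hj | rfl | hj
      · rw [sum_pairVal hq hj hM hmax]
        have : pairVal q i j (I.erase i) (J.erase i) = 0 := by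
          simp [pairVal, hj.ne']
        rw [this]; simp
      · rw [Finset.sum_eq_zero, add_zero]
        · by_cases hIJ : I = J
          · subst hIJ
            have : I.filter (fun x => j < x) = ∅ :=
              Finset.filter_eq_empty_iff.mpr fun x hx => not_lt_of_ge (hmax x hx)
            simp [pairVal, hM, this]
          · rw [pairVal, pairVal, if_pos rfl, if_pos rfl, if_neg hIJ]
            split_ifs with h1 h2 h3
            · exact absurd (Finset.mem_erase.mp h3).1 (by simp)
            · exfalso
              apply hIJ
              rw [← Finset.insert_erase h1, h2, Finset.insert_erase hM]
            · simp
            · rfl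
        · intro l hl
          have hl' := (Finset.mem_filter.mp hl).2
          rw [pairVal, if_neg hl'.ne, if_neg (fun h => lt_asymm h.1 hl')]
          simp
      · rw [Finset.sum_eq_zero]
        · simp [pairVal, hj.ne, lt_asymm hj]
        · intro l hl
          have hl' := (Finset.mem_filter.mp hl).2.trans hj
          rw [pairVal, if_neg hl'.ne, if_neg (fun h => lt_asymm h.1 hl')]
          simp
    · rw [if_neg hi, if_neg hi, add_zero, one_mul]
      exact pairVal_erase hi hM hmax

/-- The two expressions for the exponent agree. -/
lemma exponent_eq {n : ℕ} {i j : Fin n} (hij : j < i) {I J : Finset (Fin n)}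
    (h : I.erase j = J.erase i) :
    -((((I ∩ J).filter fun x => j < x ∧ x < i).card : ℤ)) =
      ((I.filter fun x => x < j).card : ℤ) - ((J.filter fun x => x < i).card : ℤ) := by
  have hmem : ∀ x, (x ≠ j ∧ x ∈ I) ↔ (x ≠ i ∧ x ∈ J) := fun x => by
    simpa only [Finset.mem_erase] using Finset.ext_iff.mp h x
  have e : J.filter (fun x => x < i) =
      (I.filter fun x => x < j) ∪ (I ∩ J).filter fun x => j < x ∧ x < i := by
    ext x
    simp only [Finset.mem_filter, Finset.mem_union, Finset.mem_inter]
    have hx := hmem x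
    constructor
    · rintro ⟨h1, h2⟩
      have h3 := hx.mpr ⟨h2.ne, h1⟩
      rcases lt_or_gt_of_ne h3.1 with h4 | h4
      · exact Or.inl ⟨h3.2, h4⟩
      · exact Or.inr ⟨⟨h3.2, h1⟩, h4, h2⟩
    · rintro (⟨h1, h2⟩ | ⟨⟨_, h1⟩, _, h2⟩)
      · exact ⟨(hx.mp ⟨h2.ne, h1⟩).2, h2.trans hij⟩
      · exact ⟨h1, h2⟩
  rw [e, Finset.card_union_of_disjoint]
  · push_cast; ring
  · rw [Finset.disjoint_left]
    intro x h1 h2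
    exact lt_asymm (Finset.mem_filter.mp h1).2 (Finset.mem_filter.mp h2).2.1

/-- Value of `r(X_{ij}, [I|J])` for `i > j`. -/
theorem stmt6 (k : Type*) [Field k] (n : ℕ) (hn : 0 < n) (q : k) (hq : q ≠ 0)
    (Δ : A k n q →ₐ[k] A k n q ⊗[k] A k n q) (ε : A k n q →ₐ[k] k)
    (hΔ : IsComul k n q Δ) (hε : IsCounit k n q ε)
    (r : A k n q →ₗ[k] A k n q →ₗ[k] k) (hr : IsRForm k n q Δ ε r)
    (i j : Fin n) (hij : j < i) (I J : Finset (Fin n)) (hIJ : I.card = J.card) :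
    ((i ∈ J ∧ j ∈ I ∧ I.erase j = J.erase i) →
      r (X k n q i j) (qMinor k n q I J) =
          (q - q⁻¹) * (-q) ^ (-((((I ∩ J).filter fun x => j < x ∧ x < i).card : ℤ))) ∧
        -((((I ∩ J).filter fun x => j < x ∧ x < i).card : ℤ)) =
          ((I.filter fun x => x < j).card : ℤ) - ((J.filter fun x => x < i).card : ℤ)) ∧
    (¬ (i ∈ J ∧ j ∈ I ∧ I.erase j = J.erase i) →
      r (X k n q i j) (qMinor k n q I J) = 0) := by
  have hval := r_X_qMinor_eq hq hΔ hε hr J.card I J hIJ rfl i j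
  rw [pairVal, if_neg hij.ne'] at hval
  refine ⟨fun h => ⟨?_, exponent_eq hij h.2.2⟩, fun h => ?_⟩
  · rw [hval, if_pos ⟨hij, h⟩]
  · rw [hval, if_neg (fun h' => h h'.2)]

end
end

section
/- For all index sets I,M,N ⊆ {1,…,n} with |M| = |N|, one has r([I|I],[M|N]) = r([M|N],[I|I]) = q^{|I∩M|} δ(M,N), where δ(M,N) = 1 if M = N and 0 otherwise. -/
/-!
Both `r(-, [I|I])` and `r([I|I], -)` turn out to be algebra characters of `O_q(M_n(k))`, and they
are the same one: `X_{ab} ↦ δ_{ab} q^{[a ∈ I]}`.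

Fix a side and let `Φ(c)` be the functional `r(c, -)` (resp. `r(-, c)`). On a product of generators
the functionals `Φ(X_{ij})` are computed by summing over paths from `i` to `j`; since the values of
`r` on generators are triangular, only monotone paths contribute. Hence `Φ(X_{ij})` vanishes on one
strict side of the diagonal, and `Φ(X_{ii})` is a character sending each `X_{ab}` with `a ≠ b` to
zero (`offdiag_eq_zero`, `isDiagChar_diag`). By the hexagon axioms `Φ` turns products into
convolutions (in one order or the other). A nonidentity permutation moves some index up and another
one down, so only the identity term of `[I|I]` survives under `Φ`, and it gives a convolution of
diagonal characters, again a diagonal character (`isDiagChar_qMinor`). Finally, a diagonal character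
kills every term of `[M|N]` except the identity term when `M = N` (`IsDiagChar.apply_qMinor`).
No comultiplication formula for quantum minors is needed.
-/

open scoped TensorProduct
open scoped Classical

noncomputable section

open QMat

namespace QMat

variable {k : Type*} [Field k] {n : ℕ} {q : k}

/-! ### Diagonal characters and triangular matrix coefficients -/

/-- The linear functional `φ` is an algebra character of `O_q(M_n(k))` whose matrix of values on
the generators is diagonal with entries `w`. -/
def IsDiagChar (φ : A k n q →ₗ[k] k) (w : Fin n → k) : Prop :=
  ∃ χ : A k n q →ₐ[k] k, χ.toLinearMap = φ ∧ ∀ a b, χ (X k n q a b) = if a = b then w a else 0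

theorem A_induction {P : A k n q → Prop} (hc : ∀ c : k, P (algebraMap k _ c))
    (hX : ∀ i j, P (X k n q i j)) (hmul : ∀ a b, P a → P b → P (a * b))
    (hadd : ∀ a b, P a → P b → P (a + b)) (a : A k n q) : P a := by
  obtain ⟨x, rfl⟩ := RingQuot.mkAlgHom_surjective k (Rel k n q) a
  induction x using FreeAlgebra.induction with
  | grade0 c => rw [AlgHom.commutes]; exact hc c
  | grade1 p => exact hX p.1 p.2
  | mul a b ha hb => rw [map_mul]; exact hmul _ _ ha hb
  | add a b ha hb => rw [map_add]; exact hadd _ _ ha hb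

/-- A family of functionals that multiplies like (opposite) matrix coefficients and is triangular on
the generators is triangular everywhere. -/
theorem offdiag_eq_zero (f : Fin n → Fin n → A k n q →ₗ[k] k)
    (h1 : ∀ i j, f i j 1 = if i = j then 1 else 0)
    (hmul : ∀ i j b c, f i j (b * c) = ∑ l, f i l c * f l j b)
    (hX : ∀ i j, i < j → ∀ a b, f i j (X k n q a b) = 0) (i j : Fin n) (hij : i < j) :
    f i j = 0 := by
  ext1 a
  induction a using A_induction generalizing i j with
  | hc c => simp [Algebra.algebraMap_eq_smul_one, h1, hij.ne]
  | hX a b => simpa using hX i j hij a b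
  | hadd a b ha hb => rw [map_add, ha i j hij, hb i j hij]; simp
  | hmul a b ha hb =>
    rw [hmul]
    apply Finset.sum_eq_zero
    intro l _
    rcases lt_or_ge i l with h | h
    · simp [hb i l h]
    · simp [ha l j (h.trans_lt hij)]

/-- The diagonal entries of a triangular family of matrix coefficients are characters. -/
theorem isDiagChar_diag (f : Fin n → Fin n → A k n q →ₗ[k] k)
    (h1 : ∀ i j, f i j 1 = if i = j then 1 else 0)
    (hmul : ∀ i j b c, f i j (b * c) = ∑ l, f i l c * f l j b)
    (hX : ∀ i j, i < j → ∀ a b, f i j (X k n q a b) = 0) (i : Fin n) (w : Fin n → k)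
    (hw : ∀ a b, f i i (X k n q a b) = if a = b then w a else 0) :
    IsDiagChar (f i i) w := by
  refine ⟨AlgHom.ofLinearMap (f i i) (by simp [h1]) ?_, by ext1; rfl, hw⟩
  intro b c
  rw [hmul, Finset.sum_eq_single i, mul_comm]
  · intro l _ hl
    rcases lt_or_gt_of_ne hl with h | h
    · simp [offdiag_eq_zero f h1 hmul hX l i h]
    · simp [offdiag_eq_zero f h1 hmul hX i l h]
  · simp

theorem IsDiagChar.conv {φ ψ : A k n q →ₗ[k] k} {v w : Fin n → k} (hφ : IsDiagChar φ v)
    (hψ : IsDiagChar ψ w) {Δ : A k n q →ₐ[k] A k n q ⊗[k] A k n q} (hΔ : IsComul k n q Δ) :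
    IsDiagChar (biform k n q φ ψ ∘ₗ Δ.toLinearMap) (v * w) := by
  obtain ⟨χ, rfl, hχ⟩ := hφ
  obtain ⟨η, rfl, hη⟩ := hψ
  refine ⟨((Algebra.TensorProduct.lid k k).toAlgHom.comp (Algebra.TensorProduct.map χ η)).comp Δ,
    ?_, ?_⟩
  · ext1 x
    rfl
  · intro a b
    simp only [AlgHom.comp_apply, hΔ a b, map_sum, Algebra.TensorProduct.map_tmul, hχ, hη]
    by_cases hab : a = b
    · subst hab
      simp
    · simp [hab]

/-! ### Quantum minors under diagonal characters -/

theorem exists_perm_lt {t : ℕ} {σ : Equiv.Perm (Fin t)} (hσ : σ ≠ 1) : ∃ l, σ l < l := by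
  by_contra! h
  apply hσ
  have hs : ∑ l : Fin t, (l : ℕ) = ∑ l : Fin t, (σ l : ℕ) :=
    (Equiv.sum_comp σ fun l : Fin t => (l : ℕ)).symm
  rw [Finset.sum_eq_sum_iff_of_le fun l _ => Fin.le_def.1 (h l)] at hs
  ext l
  exact (hs l (Finset.mem_univ l)).symm

theorem exists_perm_gt {t : ℕ} {σ : Equiv.Perm (Fin t)} (hσ : σ ≠ 1) : ∃ l, l < σ l := by
  obtain ⟨l, hl⟩ := exists_perm_lt (σ := σ⁻¹) (by simpa using hσ)
  exact ⟨σ⁻¹ l, by simpa using hl⟩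

theorem inversions_one (t : ℕ) : inversions (1 : Equiv.Perm (Fin t)) = 0 := by
  rw [inversions, Finset.card_eq_zero, Finset.filter_eq_empty_iff]
  rintro p - ⟨h, h'⟩
  exact lt_asymm h h'

/-- A diagonal character evaluates the quantum minor `[M|N]` as the classical minor of a diagonal
matrix. -/
theorem IsDiagChar.apply_qMinor {φ : A k n q →ₗ[k] k} {w : Fin n → k} (hφ : IsDiagChar φ w)
    (M N : Finset (Fin n)) (h : M.card = N.card) :
    φ (qMinor k n q M N) = if M = N then ∏ a ∈ M, w a else 0 := by
  obtain ⟨χ, rfl, hχ⟩ := hφ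
  rw [qMinor, dif_pos h]
  simp only [AlgHom.toLinearMap_apply, map_sum, map_smul, map_list_prod, List.map_ofFn,
    List.prod_ofFn, Function.comp_apply, hχ]
  split_ifs with hMN
  · subst hMN
    rw [Finset.sum_eq_single 1]
    · simp only [inversions_one, Equiv.Perm.one_apply, if_true, pow_zero, one_smul]
      rw [← Finset.prod_coe_sort M w]
      exact Equiv.prod_comp (M.orderIsoOfFin rfl).toEquiv fun x : M => w x
    · intro σ _ hσ
      obtain ⟨l, hl⟩ := exists_perm_lt hσ
      rw [Finset.prod_eq_zero (Finset.mem_univ l), smul_zero]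
      rw [if_neg]
      intro he
      exact hl.ne ((M.orderIsoOfFin rfl).injective (Subtype.ext he))
    · simp
  · apply Finset.sum_eq_zero
    intro σ _
    rw [smul_eq_mul, mul_eq_zero, Finset.prod_eq_zero_iff]
    right
    by_contra! hne
    have hmem : ∀ l, ((M.orderIsoOfFin rfl (σ l) : M) : Fin n) = (N.orderIsoOfFin h.symm l : N) :=
      fun l => by
        by_contra hl
        exact hne l (Finset.mem_univ l) (if_neg hl)
    refine hMN (Finset.eq_of_subset_of_card_le (fun a ha => ?_) h.ge)
    obtain ⟨l, hl⟩ := (M.orderIsoOfFin rfl).surjective ⟨a, ha⟩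
    have := hmem (σ⁻¹ l)
    rw [show σ (σ⁻¹ l) = l by simp, hl] at this
    rw [show a = _ from this]
    exact Subtype.prop _

/-- If `Φ` sends `1` to the counit and products to convolutions in either order (of which `h1`, `hl`,
`hr`, `hmul` record the relevant consequences), is triangular on the generators in either direction, and sends `X_{ii}`
to the diagonal character with weight `q` at `i` and `1` elsewhere, then it sends `[I|I]` to the
diagonal character with weight `q` on `I` and `1` elsewhere. -/
theorem isDiagChar_qMinor (Φ : A k n q →ₗ[k] A k n q →ₗ[k] k)
    (h1 : IsDiagChar (Φ 1) 1)
    (hl : ∀ b c, Φ b = 0 → Φ (b * c) = 0) (hr : ∀ b c, Φ c = 0 → Φ (b * c) = 0)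
    (hmul : ∀ b c v w, IsDiagChar (Φ b) v → IsDiagChar (Φ c) w → IsDiagChar (Φ (b * c)) (v * w))
    (htri : (∀ i j, i < j → Φ (X k n q i j) = 0) ∨ (∀ i j, j < i → Φ (X k n q i j) = 0))
    (hdiag : ∀ i, IsDiagChar (Φ (X k n q i i)) fun a => if i = a then q else 1)
    (I : Finset (Fin n)) :
    IsDiagChar (Φ (qMinor k n q I I)) fun a => if a ∈ I then q else 1 := by
  have hzero : ∀ L : List (A k n q), ∀ x ∈ L, Φ x = 0 → Φ L.prod = 0 := by
    intro L
    induction L with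
    | nil => simp
    | cons y L ih =>
      intro x hx hx0
      rw [List.prod_cons]
      rcases List.mem_cons.1 hx with rfl | hx
      · exact hl _ _ hx0
      · exact hr _ _ (ih x hx hx0)
  have hlist : ∀ L : List (Fin n),
      IsDiagChar (Φ (L.map fun i => X k n q i i).prod) fun a => q ^ L.count a := by
    intro L
    induction L with
    | nil =>
      convert h1 using 1
      · simp
      · ext a
        simp
    | cons i L ih =>
      rw [List.map_cons, List.prod_cons]
      convert hmul _ _ _ _ (hdiag i) ih using 1
      ext a
      by_cases h : i = a
      · subst h
        simp [pow_succ']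
      · simp [h]
  rw [qMinor, dif_pos rfl, map_sum, Finset.sum_eq_single 1]
  · simp only [inversions_one, pow_zero, one_smul, Equiv.Perm.one_apply]
    convert hlist (List.ofFn fun l => (I.orderIsoOfFin rfl l : Fin n)) using 1
    · rw [List.map_ofFn]; rfl
    · ext a
      have hnd : (List.ofFn fun l => (I.orderIsoOfFin rfl l : Fin n)).Nodup :=
        List.nodup_ofFn.2 (Subtype.val_injective.comp (I.orderIsoOfFin rfl).injective)
      have hmem : a ∈ (List.ofFn fun l => (I.orderIsoOfFin rfl l : Fin n)) ↔ a ∈ I := by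
        rw [List.mem_ofFn]
        constructor
        · rintro ⟨l, rfl⟩
          exact Subtype.prop _
        · intro ha
          obtain ⟨l, hl⟩ := (I.orderIsoOfFin rfl).surjective ⟨a, ha⟩
          exact ⟨l, by simp [hl]⟩
      rw [hnd.count]
      simp only [hmem]
      split_ifs <;> simp
  · intro σ _ hσ
    rw [map_smul]
    have key : ∃ l, Φ (X k n q (I.orderIsoOfFin rfl (σ l)) (I.orderIsoOfFin rfl l)) = 0 := by
      rcases htri with h | h
      · obtain ⟨l, hl⟩ := exists_perm_lt hσ
        exact ⟨l, h _ _ ((I.orderIsoOfFin rfl).strictMono hl)⟩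
      · obtain ⟨l, hl⟩ := exists_perm_gt hσ
        exact ⟨l, h _ _ ((I.orderIsoOfFin rfl).strictMono hl)⟩
    obtain ⟨l, hl⟩ := key
    rw [hzero _ _ (List.mem_ofFn.2 ⟨l, rfl⟩) hl, smul_zero]
  · simp

/-! ### The two functionals attached to a principal minor -/

theorem isDiagChar_counit {ε : A k n q →ₐ[k] k} (hε : IsCounit k n q ε) :
    IsDiagChar ε.toLinearMap 1 := ⟨ε, rfl, hε⟩

theorem biform_zero_left (f : A k n q →ₗ[k] k) : biform k n q 0 f = 0 := by
  simp [biform]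

theorem biform_zero_right (f : A k n q →ₗ[k] k) : biform k n q f 0 = 0 := by
  simp [biform]

theorem biform_comul_X (f g : A k n q →ₗ[k] k) {Δ : A k n q →ₐ[k] A k n q ⊗[k] A k n q}
    (hΔ : IsComul k n q Δ) (i j : Fin n) :
    biform k n q f g (Δ (X k n q i j)) = ∑ l, f (X k n q i l) * g (X k n q l j) := by
  simp [hΔ i j, biform]

theorem isDiagChar_left {Δ : A k n q →ₐ[k] A k n q ⊗[k] A k n q} {ε : A k n q →ₐ[k] k}
    (hΔ : IsComul k n q Δ) (hε : IsCounit k n q ε)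
    {r : A k n q →ₗ[k] A k n q →ₗ[k] k} (hr : IsRForm k n q Δ ε r) (I : Finset (Fin n)) :
    IsDiagChar (r (qMinor k n q I I)) fun a => if a ∈ I then q else 1 := by
  obtain ⟨-, h2, h3, h4, h5⟩ := hr
  have e : ∀ b c, r (b * c) = biform k n q (r b) (r c) ∘ₗ Δ.toLinearMap := fun b c => by
    ext1 x
    exact h2 b c x
  have f1 : ∀ i j, r (X k n q i j) 1 = if i = j then 1 else 0 := fun i j => by
    rw [(h4 _).1, hε i j]
  have fmul : ∀ i j b c, r (X k n q i j) (b * c) =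
      ∑ l, r (X k n q i l) c * r (X k n q l j) b := fun i j b c => by
    rw [h3, biform_comul_X _ _ hΔ]; rfl
  have fX : ∀ i j, i < j → ∀ a b, r (X k n q i j) (X k n q a b) = 0 := fun i j hij a b => by
    simp [h5, hij.ne, hij.not_gt]
  refine isDiagChar_qMinor r ?_ ?_ ?_ ?_ (.inl ?_) ?_ I
  · convert isDiagChar_counit hε using 1
    ext1 x
    exact (h4 x).2
  · intro b c hb
    rw [e, hb, biform_zero_left, LinearMap.zero_comp]
  · intro b c hc
    rw [e, hc, biform_zero_right, LinearMap.zero_comp]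
  · intro b c v w hb hc
    rw [e]
    exact hb.conv hc hΔ
  · exact offdiag_eq_zero (fun i j => r (X k n q i j)) f1 fmul fX
  · intro i
    refine isDiagChar_diag (fun i j => r (X k n q i j)) f1 fmul fX i _ fun a b => ?_
    rw [h5]
    by_cases hab : a = b
    · simp [hab]
    · simp [hab]

theorem isDiagChar_right {Δ : A k n q →ₐ[k] A k n q ⊗[k] A k n q} {ε : A k n q →ₐ[k] k}
    (hΔ : IsComul k n q Δ) (hε : IsCounit k n q ε)
    {r : A k n q →ₗ[k] A k n q →ₗ[k] k} (hr : IsRForm k n q Δ ε r) (I : Finset (Fin n)) :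
    IsDiagChar (r.flip (qMinor k n q I I)) fun a => if a ∈ I then q else 1 := by
  obtain ⟨-, h2, h3, h4, h5⟩ := hr
  have e : ∀ b c, r.flip (b * c) = biform k n q (r.flip c) (r.flip b) ∘ₗ Δ.toLinearMap :=
    fun b c => by
      ext1 x
      exact h3 x b c
  -- The indices are transposed so that the order of multiplication is that of `isDiagChar_diag`.
  have f1 : ∀ i j, r.flip (X k n q j i) 1 = if i = j then 1 else 0 := fun i j => by
    rw [LinearMap.flip_apply, (h4 _).2, hε j i]
    simp only [eq_comm]
  have fmul : ∀ i j b c, r.flip (X k n q j i) (b * c) =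
      ∑ l, r.flip (X k n q l i) c * r.flip (X k n q j l) b := fun i j b c => by
    rw [LinearMap.flip_apply, h2, biform_comul_X _ _ hΔ]
    exact Finset.sum_congr rfl fun l _ => mul_comm _ _
  have fX : ∀ i j, i < j → ∀ a b, r.flip (X k n q j i) (X k n q a b) = 0 := fun i j hij a b => by
    rw [LinearMap.flip_apply, h5, if_neg, if_neg, if_neg]
    · rintro ⟨rfl, rfl, h⟩
      exact lt_asymm h hij
    · exact fun h => hij.ne' h.2
    · exact fun h => hij.ne' h.2.1
  refine isDiagChar_qMinor r.flip ?_ ?_ ?_ ?_ (.inr ?_) ?_ I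
  · convert isDiagChar_counit hε using 1
    ext1 x
    exact (h4 x).1
  · intro b c hb
    rw [e, hb, biform_zero_right, LinearMap.zero_comp]
  · intro b c hc
    rw [e, hc, biform_zero_left, LinearMap.zero_comp]
  · intro b c v w hb hc
    rw [e, mul_comm v w]
    exact hc.conv hb hΔ
  · intro i j hij
    exact offdiag_eq_zero (fun i j => r.flip (X k n q j i)) f1 fmul fX j i hij
  · intro i
    refine isDiagChar_diag (fun i j => r.flip (X k n q j i)) f1 fmul fX i _ fun a b => ?_
    rw [LinearMap.flip_apply, h5]
    by_cases hab : a = b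
    · subst hab
      simp [eq_comm]
    · have : ¬ (i = b ∧ a = i ∧ b < a) := fun h => hab (h.2.1.trans h.1)
      simp [hab]
      grind

end QMat

/-- `r([I|I],[M|N]) = r([M|N],[I|I]) = q^{|I∩M|} δ(M,N)`. -/
theorem stmt7 (k : Type*) [Field k] (n : ℕ) (hn : 0 < n) (q : k) (hq : q ≠ 0)
    (Δ : A k n q →ₐ[k] A k n q ⊗[k] A k n q) (ε : A k n q →ₐ[k] k)
    (hΔ : IsComul k n q Δ) (hε : IsCounit k n q ε)
    (r : A k n q →ₗ[k] A k n q →ₗ[k] k) (hr : IsRForm k n q Δ ε r)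
    (I M N : Finset (Fin n)) (hMN : M.card = N.card) :
    r (qMinor k n q I I) (qMinor k n q M N) = r (qMinor k n q M N) (qMinor k n q I I) ∧
    r (qMinor k n q I I) (qMinor k n q M N) =
      q ^ (I ∩ M).card * (if M = N then 1 else 0) := by
  have hL := (isDiagChar_left hΔ hε hr I).apply_qMinor M N hMN
  have hR := (isDiagChar_right hΔ hε hr I).apply_qMinor M N hMN
  rw [LinearMap.flip_apply] at hR
  refine ⟨hL.trans hR.symm, hL.trans ?_⟩
  rw [Finset.prod_ite_mem, Finset.prod_const, Finset.inter_comm]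
  split_ifs <;> simp

end
end

section
/- Let i,j ∈ {1,…,n} and let I,J ⊆ {1,…,n} with |I| = |J|. Then in A: q^{δ(i,I)} X_{ij}[I|J] + (1 − δ(i,I)) q̂ Σ_{l∈I, l<i} (−q)^{−|(l,i)∩I|} X_{lj}[(I∖{l})∪{i} | J] = q^{δ(j,J)} [I|J]X_{ij} + (1 − δ(j,J)) q̂ Σ_{l∈J, l>j} (−q)^{−|(j,l)∩J|} [I | (J∖{l})∪{j}] X_{il}, where δ(i,I) = 1 if i ∈ I and 0 otherwise, and (l,i), (j,l) denote open integer intervals. -/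
/-!
The relation says that the matrix of quantum minors of size `t` and the matrix `(X_{ij})` satisfy an
RTT relation: an R-matrix on `V ⊗ Λ^t`, acting on the row indices `(i, I)`, equals one acting on the
column indices `(j, J)`. These two actions are `rowR` and `colR`, defined on an arbitrary function in
place of the products of generators and minors.

For `t = 1` the relation is a rewriting of the defining relations (`X_rtt`). In general, proceed by
induction on `J`, writing `J = {b} ∪ J'` with `b` below `J'`. Expand each minor along its first column
(`qMinor_insert`). On the row side, the R-matrix on `V ⊗ Λ^{t+1}` is compatible with the splitting
`Λ^{t+1} → V ⊗ Λ^t` (`row_hex`), so that it factors through the R-matrix on `V ⊗ Λ^t`, to which the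
induction hypothesis applies, and the one on `V ⊗ V`, to which `X_rtt` applies. Both are thereby moved
to the column indices, where they recombine (`col_hex`). This last step only requires that a minor
with two equal initial columns vanish, and that the exchange of its two initial columns cost a factor
`-q` (`colExp_self`, `colExp_swap`); both follow from the relations in a `2 × 2` block after grouping
the double Laplace expansion by pairs of rows (`lap_lap`).
-/

open scoped TensorProduct
open scoped Classical

noncomputable section

/-! ### Formal row, column and Laplace operators -/

namespace QMat

variable {k : Type*} [Field k] {n : ℕ} {q : k}

section Gen
variable {M N : Type*} [AddCommGroup M] [Module k M] [AddCommGroup N] [Module k N]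

/-- The number of elements of `I` below `a`. -/
def cnt (a : Fin n) (I : Finset (Fin n)) : ℕ := (I.filter fun x => x < a).card

/-- The formal Laplace expansion `∑_{a ∈ I} (-q)^{#{x ∈ I : x < a}} g(a, I ∖ {a})`, i.e. the splitting
`Λ^{t+1} → V ⊗ Λ^t` of a quantum exterior power applied to the basis vector indexed by `I` and
followed by `g`. -/
def lap (q : k) (I : Finset (Fin n)) (g : Fin n → Finset (Fin n) → M) : M :=
  ∑ a ∈ I, ((-q) ^ (cnt a I : ℤ)) • g a (I.erase a)

/-- The left-hand side of the commutation relation, with `X_{lj}[K|J]` replaced by an arbitrary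
function `g(l, K)`: the R-matrix acting on `V ⊗ Λ^t` on the row indices `(i, I)`. -/
def rowR (q : k) (i : Fin n) (I : Finset (Fin n)) (g : Fin n → Finset (Fin n) → M) : M :=
  (q ^ (if i ∈ I then 1 else 0)) • g i I
      + ((if i ∈ I then (0 : k) else 1) * (q - q⁻¹)) •
          ∑ l ∈ I.filter (fun l => l < i),
            ((-q) ^ (-(((I.filter fun x => l < x ∧ x < i).card : ℤ)))) •
              g l (insert i (I.erase l))

/-- The right-hand side of the commutation relation, with `[I|K]X_{il}` replaced by an arbitrary
function `g(l, K)`: the R-matrix acting on the column indices `(j, J)`. -/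
def colR (q : k) (j : Fin n) (J : Finset (Fin n)) (g : Fin n → Finset (Fin n) → M) : M :=
  (q ^ (if j ∈ J then 1 else 0)) • g j J
      + ((if j ∈ J then (0 : k) else 1) * (q - q⁻¹)) •
          ∑ l ∈ J.filter (fun l => j < l),
            ((-q) ^ (-(((J.filter fun x => j < x ∧ x < l).card : ℤ)))) •
              g l (insert j (J.erase l))

/-- The operator `rowR` for a one-element row set `{a}`, with the set recorded by its element. -/
def rowP (q : k) (i a : Fin n) (g : Fin n → Fin n → M) : M :=
  (q ^ (if i = a then 1 else 0)) • g i a + (if a < i then q - q⁻¹ else 0) • g a i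

/-- The operator `colR` for a one-element column set `{b}`, with the set recorded by its element. -/
def colP (q : k) (j b : Fin n) (g : Fin n → Fin n → M) : M :=
  (q ^ (if j = b then 1 else 0)) • g j b + (if j < b then q - q⁻¹ else 0) • g b j

lemma lap_map (φ : M →ₗ[k] N) (I : Finset (Fin n)) (g : Fin n → Finset (Fin n) → M) :
    φ (lap q I g) = lap q I fun a K => φ (g a K) := by
  simp [lap]

lemma rowR_map (φ : M →ₗ[k] N) (i : Fin n) (I : Finset (Fin n))
    (g : Fin n → Finset (Fin n) → M) :
    φ (rowR q i I g) = rowR q i I fun a K => φ (g a K) := by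
  simp only [rowR, map_add, map_smul, map_sum]

lemma colR_map (φ : M →ₗ[k] N) (i : Fin n) (I : Finset (Fin n))
    (g : Fin n → Finset (Fin n) → M) :
    φ (colR q i I g) = colR q i I fun a K => φ (g a K) := by
  simp only [colR, map_add, map_smul, map_sum]

lemma lap_add (I : Finset (Fin n)) (g h : Fin n → Finset (Fin n) → M) :
    lap q I (fun a K => g a K + h a K) = lap q I g + lap q I h := by
  simp [lap, Finset.sum_add_distrib]

lemma lap_smul (c : k) (I : Finset (Fin n)) (g : Fin n → Finset (Fin n) → M) :
    lap q I (fun a K => c • g a K) = c • lap q I g := by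
  simp only [lap, Finset.smul_sum, smul_comm c]

lemma lap_zero (I : Finset (Fin n)) : lap q I (fun _ _ => (0 : M)) = 0 := by
  simp [lap]

lemma lap_sum {ι : Type*} (s : Finset ι) (I : Finset (Fin n))
    (g : ι → Fin n → Finset (Fin n) → M) :
    lap q I (fun a K => ∑ x ∈ s, g x a K) = ∑ x ∈ s, lap q I (g x) := by
  simp only [lap, Finset.smul_sum]
  exact Finset.sum_comm

lemma rowR_add (i : Fin n) (I : Finset (Fin n)) (g h : Fin n → Finset (Fin n) → M) :
    rowR q i I (fun a K => g a K + h a K) = rowR q i I g + rowR q i I h := by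
  simp only [rowR, smul_add, Finset.sum_add_distrib]
  abel

lemma rowR_smul (c : k) (i : Fin n) (I : Finset (Fin n)) (g : Fin n → Finset (Fin n) → M) :
    rowR q i I (fun a K => c • g a K) = c • rowR q i I g := by
  simp only [rowR, smul_add, Finset.smul_sum, smul_comm c]

lemma lap_congr {I : Finset (Fin n)} {g h : Fin n → Finset (Fin n) → M}
    (H : ∀ a ∈ I, g a (I.erase a) = h a (I.erase a)) : lap q I g = lap q I h :=
  Finset.sum_congr rfl fun a ha => by rw [H a ha]

lemma rowR_congr {i : Fin n} {I : Finset (Fin n)} {g h : Fin n → Finset (Fin n) → M}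
    (H : ∀ a K, K.card = I.card → g a K = h a K) : rowR q i I g = rowR q i I h := by
  unfold rowR
  rw [H i I rfl]
  congr 1
  by_cases hi : i ∈ I
  · simp [hi]
  congr 1
  refine Finset.sum_congr rfl fun l hl => ?_
  rw [H]
  have hlI := (Finset.mem_filter.1 hl).1
  rw [Finset.card_insert_of_notMem (by simp [hi]), Finset.card_erase_add_one hlI]

/-! ### Counting positions -/

lemma cnt_erase {a x : Fin n} {I : Finset (Fin n)} (ha : a ∈ I) :
    (cnt x (I.erase a) : ℤ) = cnt x I - (if a < x then 1 else 0) := by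
  unfold cnt
  rw [Finset.filter_erase]
  split_ifs with h
  · have : a ∈ I.filter (fun y => y < x) := by simp [ha, h]
    have := Finset.card_erase_add_one this
    omega
  · rw [Finset.erase_eq_of_notMem (by simp [h])]; simp

lemma cnt_insert {a x : Fin n} {I : Finset (Fin n)} (ha : a ∉ I) :
    (cnt x (insert a I) : ℤ) = cnt x I + (if a < x then 1 else 0) := by
  unfold cnt
  rw [Finset.filter_insert]
  split_ifs with h
  · rw [Finset.card_insert_of_notMem (by simp [ha])]; simp
  · simp

lemma card_between {l i : Fin n} {I : Finset (Fin n)} (hl : l ∈ I) (h : l < i) :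
    ((I.filter fun x => l < x ∧ x < i).card : ℤ) = cnt i I - cnt l I - 1 := by
  unfold cnt
  have : I.filter (fun x => x < i)
      = insert l (I.filter (fun x => x < l) ∪ I.filter (fun x => l < x ∧ x < i)) := by
    ext x
    simp only [Finset.mem_filter, Finset.mem_insert, Finset.mem_union]
    constructor
    · rintro ⟨h1, h2⟩
      rcases lt_trichotomy x l with h3 | h3 | h3
      · exact Or.inr (Or.inl ⟨h1, h3⟩)
      · exact Or.inl h3
      · exact Or.inr (Or.inr ⟨h1, h3, h2⟩)
    · rintro (rfl | ⟨h1, h2⟩ | ⟨h1, h2, h3⟩)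
      · exact ⟨hl, h⟩
      · exact ⟨h1, h2.trans h⟩
      · exact ⟨h1, h3⟩
  rw [this, Finset.card_insert_of_notMem (by simp), Finset.card_union_of_disjoint]
  · push_cast; ring
  · rw [Finset.disjoint_left]
    intro x hx hx'
    simp only [Finset.mem_filter] at hx hx'
    exact absurd hx.2 (not_lt.2 hx'.2.1.le)

lemma rowR_of_mem {i : Fin n} {I : Finset (Fin n)} (hi : i ∈ I)
    (g : Fin n → Finset (Fin n) → M) : rowR q i I g = q • g i I := by
  simp [rowR, hi]

lemma rowR_of_notMem {i : Fin n} {I : Finset (Fin n)} (hi : i ∉ I)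
    (g : Fin n → Finset (Fin n) → M) :
    rowR q i I g = g i I + ∑ l ∈ I, if l < i then
      ((q - q⁻¹) * (-q) ^ ((cnt l I : ℤ) + 1 - cnt i I)) • g l (insert i (I.erase l)) else 0 := by
  simp only [rowR, hi, if_false, pow_zero, one_smul, one_mul, Finset.smul_sum, Finset.sum_filter]
  congr 1
  refine Finset.sum_congr rfl fun l hl => ?_
  split_ifs with h
  · rw [card_between hl h, smul_smul]; congr 3; ring
  · exact smul_zero _

lemma colR_of_mem {i : Fin n} {I : Finset (Fin n)} (hi : i ∈ I)
    (g : Fin n → Finset (Fin n) → M) : colR q i I g = q • g i I := by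
  simp [colR, hi]

/-! ### The combinatorial identities on row sets -/

/-- The double expansion groups its terms by unordered pairs `{a, a'}`: the two orderings of a pair
carry weights which differ by the factor `-q`. -/
lemma lap_lap (hq : q ≠ 0) (I : Finset (Fin n)) (G : Fin n → Fin n → Finset (Fin n) → M) :
    lap q I (fun a K => lap q K (fun a' L => G a a' L)) =
      ∑ a ∈ I, ∑ a' ∈ I, if a < a' then
        ((-q) ^ ((cnt a I : ℤ) + cnt a' I - 1)) •
          (G a a' ((I.erase a).erase a') + (-q) • G a' a ((I.erase a).erase a')) else 0 := by
  have hq' : -q ≠ 0 := neg_ne_zero.2 hq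
  have h1 : lap q I (fun a K => lap q K (fun a' L => G a a' L)) =
      ∑ a ∈ I, ∑ a' ∈ I, ((if a < a' then ((-q) ^ ((cnt a I : ℤ) + cnt a' I - 1)) •
          G a a' ((I.erase a).erase a') else 0) + (if a' < a then
            ((-q) ^ ((cnt a I : ℤ) + cnt a' I)) • G a a' ((I.erase a).erase a') else 0)) := by
    refine Finset.sum_congr rfl fun a ha => ?_
    beta_reduce
    rw [lap, Finset.smul_sum, ← Finset.add_sum_erase I _ ha]
    simp only [lt_irrefl, if_false, add_zero, zero_add]
    refine Finset.sum_congr rfl fun a' ha' => ?_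
    rw [cnt_erase ha, smul_smul, ← zpow_add₀ hq']
    rcases lt_or_gt_of_ne (Finset.ne_of_mem_erase ha') with h | h
    · simp [h, h.not_gt]
    · simp [h, h.not_gt, add_sub_assoc]
  rw [h1]
  simp only [Finset.sum_add_distrib]
  conv_lhs => rw [add_comm]; enter [1]; rw [Finset.sum_comm]
  simp only [← Finset.sum_add_distrib]
  refine Finset.sum_congr rfl fun a ha => Finset.sum_congr rfl fun a' ha' => ?_
  split_ifs with h
  · rw [smul_add, smul_smul, add_comm, Finset.erase_right_comm]
    congr 2
    rw [← zpow_add_one₀ hq']; congr 1; ring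
  · simp

/-- The row operator on `V ⊗ Λ^{t+1}`, followed by the splitting `Λ^{t+1} → V ⊗ Λ^t`, is the
composite of the row operator on `V ⊗ Λ^t` and the one on `V ⊗ V`. This is an identity of formal
sums, hence the arbitrary `f`. -/
lemma row_hex (hq : q ≠ 0) (i : Fin n) (I : Finset (Fin n))
    (f : Fin n → Fin n → Finset (Fin n) → M) :
    rowR q i I (fun i' I' => lap q I' fun a K => f i' a K) =
      lap q I fun a K₀ => rowR q i K₀ fun i₁ K => rowP q i₁ a fun i' a' => f i' a' K := by
  have hq' : -q ≠ 0 := neg_ne_zero.2 hq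
  by_cases hi : i ∈ I
  · rw [rowR_of_mem hi]
    unfold lap
    rw [← Finset.add_sum_erase I _ hi, ← Finset.add_sum_erase I _ hi]
    beta_reduce
    rw [rowR_of_notMem (by simp)]
    have h1 : ∀ a ∈ I.erase i, ((-q) ^ (cnt a I : ℤ)) • rowR q i (I.erase a)
        (fun i₁ K => rowP q i₁ a fun i' a' => f i' a' K) =
        q • ((-q) ^ (cnt a I : ℤ)) • f i a (I.erase a) + (if a < i then
          (q * (q - q⁻¹) * (-q) ^ (cnt a I : ℤ)) • f a i (I.erase a) else 0) := by
      intro a ha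
      obtain ⟨ha1, ha2⟩ := Finset.mem_erase.1 ha
      rw [rowR_of_mem (by simp [hi, ha1.symm]), rowP, if_neg ha1.symm]
      split_ifs with h
      · module
      · simp [smul_comm q]
    rw [Finset.sum_congr rfl h1, Finset.sum_add_distrib]
    -- The extra terms of the summand `a = i` cancel the swapped terms of the summands `a ≠ i`.
    have h2 : (-q) ^ (cnt i I : ℤ) • ∑ l ∈ I.erase i, (if l < i then
        ((q - q⁻¹) * (-q) ^ ((cnt l (I.erase i) : ℤ) + 1 - cnt i (I.erase i))) •
          rowP q l i (fun i' a' => f i' a' (insert i ((I.erase i).erase l))) else 0)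
        = - ∑ a ∈ I.erase i, (if a < i then
          (q * (q - q⁻¹) * (-q) ^ (cnt a I : ℤ)) • f a i (I.erase a) else 0) := by
      rw [Finset.smul_sum, ← Finset.sum_neg_distrib]
      refine Finset.sum_congr rfl fun l hl => ?_
      obtain ⟨hl1, hl2⟩ := Finset.mem_erase.1 hl
      split_ifs with h
      · rw [rowP, if_neg hl1, if_neg h.not_gt, Finset.erase_right_comm,
          Finset.insert_erase (by simp [hi, hl1.symm]), cnt_erase hi, cnt_erase hi,
          if_neg h.not_gt, if_neg (lt_irrefl _), smul_smul, pow_zero, one_smul, zero_smul, add_zero,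
          ← neg_smul]
        congr 1
        rw [mul_left_comm, ← zpow_add₀ hq',
          show (cnt i I : ℤ) + (cnt l I - 0 + 1 - (cnt i I - 0)) = cnt l I + 1 by ring,
          zpow_add_one₀ hq']
        ring
      · simp
    rw [smul_add ((-q) ^ (cnt i I : ℤ)), h2, rowP, if_pos rfl, if_neg (lt_irrefl _)]
    rw [smul_add, Finset.smul_sum]
    module
  · rw [rowR_of_notMem hi]
    have hl : ∀ l ∈ I, lap q (insert i (I.erase l)) (fun a K => f l a K) =
        (-q) ^ ((cnt i I : ℤ) - (if l < i then 1 else 0)) • f l i (I.erase l) +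
        ∑ a ∈ I, if a = l then 0 else
          (-q) ^ ((cnt a I : ℤ) - (if l < a then 1 else 0) + (if i < a then 1 else 0)) •
            f l a (insert i ((I.erase l).erase a)) := by
      intro l hl
      have hi' : i ∉ I.erase l := by simp [hi]
      rw [lap, Finset.sum_insert hi', Finset.erase_insert hi', cnt_insert hi', cnt_erase hl,
        if_neg (lt_irrefl i), add_zero]
      congr 1
      rw [← Finset.add_sum_erase I _ hl]
      simp only [if_true, zero_add]
      refine Finset.sum_congr rfl fun a ha => ?_
      obtain ⟨ha1, ha2⟩ := Finset.mem_erase.1 ha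
      have : i ≠ a := fun h => hi (h ▸ ha2)
      rw [if_neg ha1, cnt_insert hi', cnt_erase hl, Finset.erase_insert_of_ne this]
    have hr : ∀ a ∈ I, ((-q) ^ (cnt a I : ℤ)) • rowR q i (I.erase a)
        (fun i₁ K => rowP q i₁ a fun i' a' => f i' a' K) =
        ((-q) ^ (cnt a I : ℤ)) • f i a (I.erase a) +
        ((if a < i then ((q - q⁻¹) * (-q) ^ (cnt a I : ℤ)) • f a i (I.erase a) else 0) +
        ((∑ l ∈ I, if l = a then 0 else if l < i then
          ((q - q⁻¹) * (-q) ^ ((cnt a I : ℤ) + (cnt l I - (if a < l then 1 else 0)) + 1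
            - (cnt i I - if a < i then 1 else 0))) •
            f l a (insert i ((I.erase l).erase a)) else 0) +
        ∑ l ∈ I, if a < l ∧ l < i then
          ((q - q⁻¹) ^ 2 * (-q) ^ ((cnt a I : ℤ) + (cnt l I - 1) + 1
            - (cnt i I - 1))) •
            f a l (insert i ((I.erase l).erase a)) else 0)) := by
      intro a ha
      have hia : i ≠ a := fun h => hi (h ▸ ha)
      rw [rowR_of_notMem (by simp [hi]), smul_add, rowP, if_neg hia, smul_add, ← add_assoc]
      congr 1
      · congr 1
        · simp
        · split_ifs <;> module
      · rw [← Finset.sum_add_distrib, ← Finset.add_sum_erase I _ ha, Finset.smul_sum]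
        simp only [if_true, lt_irrefl, false_and, if_false, zero_add]
        refine Finset.sum_congr rfl fun l hl => ?_
        obtain ⟨hl1, hl2⟩ := Finset.mem_erase.1 hl
        rw [if_neg hl1]
        by_cases h : l < i
        · rw [if_pos h, if_pos h, rowP, if_neg hl1, cnt_erase ha, cnt_erase ha, pow_zero, one_smul,
            smul_smul, mul_left_comm, ← zpow_add₀ hq', Finset.erase_right_comm, smul_add]
          congr 1
          · congr 3; ring
          · by_cases h' : a < l
            · rw [if_pos h', if_pos (And.intro h' h), if_pos h', if_pos (h'.trans h), smul_smul]
              congr 1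
              rw [mul_right_comm, ← sq]; congr 2; ring
            · simp [h']
        · simp [h]
    have hL : (∑ l ∈ I, if l < i then ((q - q⁻¹) * (-q) ^ ((cnt l I : ℤ) + 1 - cnt i I)) •
        lap q (insert i (I.erase l)) (fun a K => f l a K) else 0) =
        (∑ a ∈ I, if a < i then ((q - q⁻¹) * (-q) ^ (cnt a I : ℤ)) • f a i (I.erase a) else 0) +
        ∑ l ∈ I, ∑ a ∈ I, (if a = l then 0 else if l < i then
          ((q - q⁻¹) * (-q) ^ ((cnt l I : ℤ) + 1 - cnt i I +
          (cnt a I - (if l < a then 1 else 0) + (if i < a then 1 else 0)))) •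
            f l a (insert i ((I.erase l).erase a)) else 0) := by
      rw [← Finset.sum_add_distrib]
      refine Finset.sum_congr rfl fun l hl' => ?_
      split_ifs with h
      · rw [hl l hl', smul_add, smul_smul, mul_assoc, ← zpow_add₀ hq', if_pos h, Finset.smul_sum]
        congr 1
        · congr 3; ring
        · refine Finset.sum_congr rfl fun a ha => ?_
          split_ifs <;> first | rw [smul_zero] | rw [smul_smul, mul_assoc, ← zpow_add₀ hq']
      · simp
    rw [hL]
    conv_rhs => rw [lap]
    rw [Finset.sum_congr rfl hr]
    simp only [Finset.sum_add_distrib]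
    rw [lap]
    congr 2
    conv_rhs => enter [1]; rw [Finset.sum_comm]
    rw [← Finset.sum_add_distrib]
    refine Finset.sum_congr rfl fun l hl => ?_
    rw [← Finset.sum_add_distrib]
    refine Finset.sum_congr rfl fun a ha => ?_
    have hia : i ≠ a := fun h => hi (h ▸ ha)
    -- Compare the coefficients of `f l a`; only `l < a < i` receives a quadratic contribution.
    rcases lt_trichotomy l a with h | h | h
    · rw [if_neg h.ne', if_neg h.ne, if_pos h, if_neg h.not_gt]
      by_cases h1 : a < i
      · rw [if_pos (h.trans h1), if_pos (h.trans h1), if_pos (And.intro h h1), if_pos h1, if_neg h1.not_gt,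
          Finset.erase_right_comm (a := a), ← add_smul]
        congr 1
        rw [show (cnt l I : ℤ) + 1 - cnt i I + (cnt a I - 1 + 0) = (cnt l I + cnt a I - cnt i I) by ring,
          show (cnt a I : ℤ) + (cnt l I - 0) + 1 - (cnt i I - 1) =
            (cnt l I + cnt a I - cnt i I) + 1 + 1 by ring,
          show (cnt l I : ℤ) + (cnt a I - 1) + 1 - (cnt i I - 1) =
            (cnt l I + cnt a I - cnt i I) + 1 by ring, zpow_add_one₀ hq', zpow_add_one₀ hq']
        field_simp
        ring
      · have h2 : i < a := lt_of_le_of_ne (not_lt.1 h1) hia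
        rw [if_neg (show ¬ (l < a ∧ a < i) from fun h => h1 h.2), if_neg h1, if_pos h2, add_zero]
        split_ifs
        · congr 3; ring
        · rfl
    · simp [h]
    · rw [if_neg h.ne, if_neg h.ne', if_neg h.not_gt, if_neg (show ¬ (l < a ∧ a < i) from fun h' => h.not_gt h'.1), add_zero,
        if_pos h]
      split_ifs with h1 h2 h3 h4
      all_goals first | rfl | (exfalso; omega) | (congr 3; ring)
end Gen

section Algebra

/-! ### The defining relations in R-matrix form -/

lemma X_col {i l : Fin n} (j : Fin n) (h : i < l) :
    X k n q i j * X k n q l j = q • (X k n q l j * X k n q i j) := by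
  simpa only [map_mul, map_smul, X] using
    RingQuot.mkAlgHom_rel k (Rel.col (k := k) (q := q) (j := j) h)

lemma X_row (i : Fin n) {j m : Fin n} (h : j < m) :
    X k n q i j * X k n q i m = q • (X k n q i m * X k n q i j) := by
  simpa only [map_mul, map_smul, X] using
    RingQuot.mkAlgHom_rel k (Rel.row (k := k) (q := q) (i := i) h)

lemma X_swap {i j l m : Fin n} (h1 : i < l) (h2 : m < j) :
    X k n q i j * X k n q l m = X k n q l m * X k n q i j := by
  simpa only [map_mul, map_smul, X] using
    RingQuot.mkAlgHom_rel k (Rel.swap (k := k) (q := q) h1 h2)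

lemma X_mixed {i j l m : Fin n} (h1 : i < l) (h2 : j < m) :
    X k n q i j * X k n q l m =
      X k n q l m * X k n q i j + (q - q⁻¹) • (X k n q i m * X k n q l j) := by
  simpa only [map_mul, map_smul, map_add, X] using
    RingQuot.mkAlgHom_rel k (Rel.mixed (k := k) (q := q) h1 h2)

/-- The RTT relation: for `1 × 1` minors the commutation relation is equivalent to the defining
relations. -/
lemma X_rtt (hq : q ≠ 0) (i a j b : Fin n) :
    rowP q i a (fun i' a' => X k n q i' j * X k n q a' b) =
      colP q j b (fun j' b' => X k n q a b' * X k n q i j') := by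
  unfold rowP colP
  beta_reduce
  rcases lt_trichotomy i a with h | rfl | h <;> rcases lt_trichotomy j b with h' | rfl | h'
  · rw [if_neg h.ne, if_neg h.not_gt, if_neg h'.ne, if_pos h', X_mixed h h', X_swap h h']
    module
  · rw [if_neg h.ne, if_neg h.not_gt, if_pos rfl, if_neg (lt_irrefl _), X_col j h]
    module
  · rw [if_neg h.ne, if_neg h.not_gt, if_neg h'.ne', if_neg h'.not_gt, X_swap h h']
  · rw [if_pos rfl, if_neg (lt_irrefl _), if_neg h'.ne, if_pos h', X_row i h']
    match_scalars
    field_simp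
    ring
  · simp
  · rw [if_pos rfl, if_neg (lt_irrefl _), if_neg h'.ne', if_neg h'.not_gt, X_row i h']
    module
  · rw [if_neg h.ne', if_pos h, if_neg h'.ne, if_pos h', X_swap h h']
  · rw [if_neg h.ne', if_pos h, if_pos rfl, if_neg (lt_irrefl _), X_col j h]
    match_scalars
    field_simp
    ring
  · rw [if_neg h.ne', if_pos h, if_neg h'.ne', if_neg h'.not_gt, X_mixed h h']
    module

/-! ### Laplace expansion along the first column -/

/-- The quantum minor with rows `r` and columns `c` given as sequences, of which neither need be
increasing or injective. -/
def minorFn (q : k) {t : ℕ} (r c : Fin t → Fin n) : A k n q :=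
  ∑ σ : Equiv.Perm (Fin t),
    ((-q) ^ inversions σ) • (List.ofFn fun l : Fin t => X k n q (r (σ l)) (c l)).prod

lemma qMinor_eq {t : ℕ} {I J : Finset (Fin n)} (hI : I.card = t) (hJ : J.card = t) :
    qMinor k n q I J = minorFn q (I.orderEmbOfFin hI) (J.orderEmbOfFin hJ) := by
  subst hI
  rw [qMinor, dif_pos hJ.symm]
  rfl

/-- The permutation of `Fin (t + 1)` sending `0` to `p` and `l + 1` to `p.succAbove (τ l)`. -/
def permCons {t : ℕ} (x : Fin (t + 1) × Equiv.Perm (Fin t)) : Equiv.Perm (Fin (t + 1)) :=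
  x.1.cycleRange.symm * Equiv.Perm.decomposeFin.symm (0, x.2)

lemma permCons_zero {t : ℕ} (p : Fin (t + 1)) (τ : Equiv.Perm (Fin t)) :
    permCons (p, τ) 0 = p := by
  simp [permCons]

lemma permCons_succ {t : ℕ} (p : Fin (t + 1)) (τ : Equiv.Perm (Fin t)) (l : Fin t) :
    permCons (p, τ) l.succ = p.succAbove (τ l) := by
  simp [permCons]

lemma permCons_bijective (t : ℕ) : Function.Bijective (permCons (t := t)) := by
  rw [Fintype.bijective_iff_injective_and_card]
  constructor
  · rintro ⟨p, τ⟩ ⟨p', τ'⟩ h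
    have h0 : p = p' := by rw [← permCons_zero p τ, h, permCons_zero]
    subst h0
    congr 1
    ext l
    have := permCons_succ p τ l
    rw [h, permCons_succ] at this
    rw [Fin.succAbove_right_injective this]
  · simp [Fintype.card_perm, Nat.factorial_succ]

lemma inversions_eq_sum {t : ℕ} (σ : Equiv.Perm (Fin t)) :
    inversions σ = ∑ x, ∑ y, if x < y ∧ σ y < σ x then 1 else 0 := by
  rw [inversions, Finset.card_filter, ← Finset.univ_product_univ, Finset.sum_product]

/-- The new inversions are those of position `0`, one for each of the `p` values below `p`. -/
lemma inversions_permCons {t : ℕ} (p : Fin (t + 1)) (τ : Equiv.Perm (Fin t)) :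
    inversions (permCons (p, τ)) = p + inversions τ := by
  have h : ∑ l : Fin t, (if p.succAbove (τ l) < p then 1 else 0) = (p : ℕ) := by
    rw [Equiv.sum_comp τ fun l => if p.succAbove l < p then 1 else 0]
    have h1 := Fin.sum_univ_succAbove (fun x : Fin (t + 1) => if x < p then 1 else 0) p
    rw [if_neg (lt_irrefl p), zero_add] at h1
    rw [← h1, ← Finset.card_filter]
    convert Fin.card_Iio p using 2
    ext x
    simp
  rw [inversions_eq_sum, inversions_eq_sum, Fin.sum_univ_succ]
  simp only [Fin.sum_univ_succ, permCons_zero, permCons_succ, lt_irrefl, false_and, if_false,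
    Fin.succ_pos, true_and, Fin.not_lt_zero, zero_add, Fin.succ_lt_succ_iff,
    Fin.succAbove_lt_succAbove_iff, h]

lemma minorFn_succ {t : ℕ} (r c : Fin (t + 1) → Fin n) :
    minorFn q r c = ∑ p : Fin (t + 1), ((-q) ^ (p : ℕ)) •
      (X k n q (r p) (c 0) * minorFn q (r ∘ p.succAbove) (c ∘ Fin.succ)) := by
  rw [minorFn, ← (permCons_bijective t).sum_comp, Fintype.sum_prod_type]
  refine Finset.sum_congr rfl fun p _ => ?_
  rw [minorFn, Finset.mul_sum, Finset.smul_sum]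
  refine Finset.sum_congr rfl fun τ _ => ?_
  rw [inversions_permCons, List.ofFn_succ, List.prod_cons, permCons_zero, mul_smul_comm, smul_smul,
    pow_add]
  simp only [permCons_succ, Function.comp]

lemma cnt_orderEmbOfFin {t : ℕ} {I : Finset (Fin n)} (hI : I.card = t) (p : Fin t) :
    cnt (I.orderEmbOfFin hI p) I = p := by
  have : I.filter (fun x => x < I.orderEmbOfFin hI p) =
      (Finset.Iio p).map (I.orderEmbOfFin hI).toEmbedding := by
    ext x
    simp only [Finset.mem_filter, Finset.mem_map, Finset.mem_Iio]
    constructor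
    · rintro ⟨h1, h2⟩
      have : x ∈ Set.range (I.orderEmbOfFin hI) := by simpa using h1
      obtain ⟨y, rfl⟩ := this
      exact ⟨y, by simpa using h2, rfl⟩
    · rintro ⟨y, h1, rfl⟩
      exact ⟨Finset.orderEmbOfFin_mem I hI y, by simpa using h1⟩
  rw [cnt, this, Finset.card_map, Fin.card_Iio]

/-- The sum `∑_{a ∈ I} (-q)^{#{x ∈ I : x < a}} X_{ab}[I ∖ {a}|J]`, which is a Laplace expansion when `b`
is smaller than every element of `J`, but makes sense for every `b`. -/
def colExp (q : k) (I : Finset (Fin n)) (b : Fin n) (J : Finset (Fin n)) : A k n q :=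
  lap q I fun a K => X k n q a b * qMinor k n q K J

/-- Laplace expansion of a quantum minor along its first column. -/
lemma qMinor_insert {I J : Finset (Fin n)} {b : Fin n} (hb : ∀ x ∈ J, b < x)
    (h : I.card = J.card + 1) : qMinor k n q I (insert b J) = colExp q I b J := by
  have hbJ : b ∉ J := fun hh => lt_irrefl _ (hb b hh)
  have hJ : (insert b J).card = J.card + 1 := Finset.card_insert_of_notMem hbJ
  have hc : (insert b J).orderEmbOfFin hJ = (Fin.cons b (J.orderEmbOfFin rfl) : Fin _ → Fin n) := by
    symm
    refine Finset.orderEmbOfFin_unique hJ (fun x => ?_) ?_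
    · refine Fin.cases ?_ (fun y => ?_) x
      · simp
      · simp
    · intro x y hxy
      obtain ⟨y, rfl⟩ := Fin.exists_succ_eq.2 (Fin.ne_zero_of_lt hxy)
      revert hxy
      refine Fin.cases (fun _ => ?_) (fun z hz => ?_) x
      · simpa using hb _ (Finset.orderEmbOfFin_mem J rfl y)
      · simpa using hz
  rw [qMinor_eq h hJ, minorFn_succ, colExp, lap]
  refine Finset.sum_nbij (I.orderEmbOfFin h) (fun p _ => Finset.orderEmbOfFin_mem I h p)
    (fun x _ y _ hxy => (I.orderEmbOfFin h).injective hxy) (fun x hx => ?_) fun p _ => ?_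
  · simpa using hx
  · have hcard : (I.erase (I.orderEmbOfFin h p)).card = J.card := by
      rw [Finset.card_erase_of_mem (Finset.orderEmbOfFin_mem I h p), h]; rfl
    rw [cnt_orderEmbOfFin, zpow_natCast, qMinor_eq hcard rfl, hc, Fin.cons_zero]
    congr 3
    refine Finset.orderEmbOfFin_unique hcard (fun x => ?_) ?_
    · simp [Fin.succAbove_ne]
    · exact (I.orderEmbOfFin h).strictMono.comp (Fin.strictMono_succAbove p)

lemma colExp_insert {I J : Finset (Fin n)} {b c : Fin n} (hb : ∀ x ∈ J, b < x)
    (h : I.card = J.card + 2) : colExp q I c (insert b J) =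
      lap q I fun a K => lap q K fun a' L =>
        (X k n q a c * X k n q a' b) * qMinor k n q L J := by
  refine lap_congr fun a ha => ?_
  rw [qMinor_insert hb (by rw [Finset.card_erase_of_mem ha, h]; rfl), colExp]
  exact (lap_map (LinearMap.mulLeft k (X k n q a c)) _ _).trans
    (by simp only [LinearMap.mulLeft_apply, mul_assoc])

/-- A quantum determinant with its first two columns equal vanishes. -/
lemma colExp_self (hq : q ≠ 0) {I J : Finset (Fin n)} {b : Fin n} (hb : ∀ x ∈ J, b < x)
    (h : I.card = J.card + 2) : colExp q I b (insert b J) = 0 := by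
  rw [colExp_insert hb h, lap_lap hq]
  refine Finset.sum_eq_zero fun a _ => Finset.sum_eq_zero fun a' _ => ?_
  split_ifs with h1
  · rw [X_col b h1, smul_mul_assoc]; module
  · rfl

/-- Exchanging the first two columns multiplies a quantum determinant by `-q`. -/
lemma colExp_swap (hq : q ≠ 0) {I J : Finset (Fin n)} {b j : Fin n} (hb : ∀ x ∈ J, b < x)
    (hj : j < b) (h : I.card = J.card + 2) :
    colExp q I b (insert j J) = (-q) • colExp q I j (insert b J) := by
  rw [colExp_insert (fun x hx => hj.trans (hb x hx)) h, colExp_insert hb h, lap_lap hq, lap_lap hq,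
    Finset.smul_sum]
  refine Finset.sum_congr rfl fun a _ => ?_
  rw [Finset.smul_sum]
  refine Finset.sum_congr rfl fun a' _ => ?_
  split_ifs with h1
  · rw [smul_comm (-q)]
    congr 1
    rw [X_mixed h1 hj, X_swap h1 hj]
    simp only [add_mul, smul_mul_assoc]
    match_scalars <;> field_simp
    ring
  · simp

/-! ### The column side -/

lemma colR_of_notMem {M : Type*} [AddCommGroup M] [Module k M]
    {j : Fin n} {J : Finset (Fin n)} (hj : j ∉ J)
    (g : Fin n → Finset (Fin n) → M) :
    colR q j J g = g j J + ∑ l ∈ J, if j < l then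
      ((q - q⁻¹) * (-q) ^ ((cnt j J : ℤ) - cnt l J)) • g l (insert j (J.erase l)) else 0 := by
  simp only [colR, hj, if_false, pow_zero, one_smul, one_mul, Finset.smul_sum, Finset.sum_filter]
  congr 1
  refine Finset.sum_congr rfl fun l hl => ?_
  split_ifs with h
  · have h1 : (J.filter fun x => j < x ∧ x < l) = ((insert j J).filter fun x => j < x ∧ x < l) := by
      rw [Finset.filter_insert, if_neg (by simp)]
    rw [h1, card_between (by simp) h, cnt_insert hj, cnt_insert hj, if_pos h, if_neg (lt_irrefl _),
      smul_smul]
    congr 3; ring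
  · exact smul_zero _

lemma cnt_eq_zero {b : Fin n} {J : Finset (Fin n)} (hb : ∀ x ∈ J, b < x) : cnt b J = 0 := by
  rw [cnt, Finset.card_eq_zero, Finset.filter_eq_empty_iff]
  exact fun x hx => (hb x hx).not_gt

/-- The column counterpart of `row_hex`. As `b` lies below `J`, the only rearrangements needed are
those of the first two columns, given by `colExp_self` and `colExp_swap`. -/
lemma col_hex (hq : q ≠ 0) (i j : Fin n) {I J : Finset (Fin n)} {b : Fin n}
    (hb : ∀ x ∈ J, b < x) (h : I.card = J.card + 1) :
    colP q j b (fun j₁ b₁ => colR q j₁ J fun l K => colExp q I b₁ K * X k n q i l) =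
      colR q j (insert b J) fun l K => qMinor k n q I K * X k n q i l := by
  have hq' : -q ≠ 0 := neg_ne_zero.2 hq
  have hbJ : b ∉ J := fun hh => lt_irrefl _ (hb b hh)
  have hcard : ∀ l ∈ J, I.card = (J.erase l).card + 2 := fun l hl => by
    have := Finset.card_erase_add_one hl
    omega
  have hbe : ∀ l, ∀ x ∈ J.erase l, b < x := fun l x hx => hb x (Finset.mem_of_mem_erase hx)
  unfold colP
  beta_reduce
  rcases lt_trichotomy j b with hj | rfl | hj
  · have hjJ : ∀ x ∈ J, j < x := fun x hx => hj.trans (hb x hx)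
    have hjJ' : j ∉ J := fun hh => lt_irrefl _ (hjJ j hh)
    have hjI : j ∉ insert b J := by simp [hjJ', hj.ne]
    rw [if_neg hj.ne, if_pos hj, pow_zero, one_smul, colR_of_notMem hjJ', colR_of_notMem hbJ,
      colR_of_notMem hjI, Finset.sum_insert hbJ, Finset.erase_insert hbJ, qMinor_insert hb h,
      qMinor_insert hjJ h, if_pos hj, cnt_insert hbJ, cnt_insert hbJ, if_neg hj.not_gt,
      if_neg (lt_irrefl _), cnt_eq_zero hb, cnt_eq_zero hjJ, sub_self, zpow_zero, mul_one,
      smul_add, add_assoc, add_left_comm (∑ l ∈ J, _)]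
    congr 2
    rw [Finset.smul_sum, ← Finset.sum_add_distrib]
    refine Finset.sum_congr rfl fun l hl => ?_
    have hlb : b ≠ l := (hb l hl).ne
    rw [if_pos (hjJ l hl), if_pos (hb l hl), if_pos (hjJ l hl), colExp_swap hq (hbe l) hj (hcard l hl),
      cnt_insert hbJ, if_pos (hb l hl), Finset.erase_insert_of_ne hlb, qMinor_insert (b := j)]
    · rw [smul_mul_assoc, smul_smul, smul_smul, ← add_smul]
      congr 1
      rw [show ((0 : ℕ) : ℤ) + 0 - (cnt l J + 1) = (0 - cnt l J) - 1 by simp; ring, zpow_sub_one₀ hq']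
      simp only [Nat.cast_zero]
      field_simp
      ring
    · intro x hx
      rcases Finset.mem_insert.1 hx with rfl | hx
      · exact hj
      · exact hj.trans (hbe l x hx)
    · rw [Finset.card_insert_of_notMem (by simp [hbJ]), hcard l hl]
  · rw [if_pos rfl, if_neg (lt_irrefl _), zero_smul, add_zero, colR_of_mem (Finset.mem_insert_self j J),
      colR_of_notMem hbJ, Finset.sum_eq_zero, add_zero, pow_one, qMinor_insert hb h]
    intro l hl
    rw [colExp_self hq (hbe l) (hcard l hl)]
    simp
  · rw [if_neg hj.ne', if_neg hj.not_gt, zero_smul, add_zero, pow_zero, one_smul]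
    by_cases hjJ : j ∈ J
    · rw [colR_of_mem hjJ, colR_of_mem (by simp [hjJ]), qMinor_insert hb h]
    · rw [colR_of_notMem hjJ, colR_of_notMem (by simp [hjJ, hj.ne']), qMinor_insert hb h,
        Finset.sum_insert hbJ, if_neg hj.not_gt, zero_add]
      congr 1
      refine Finset.sum_congr rfl fun l hl => ?_
      split_ifs with hjl
      · have hlb : b ≠ l := (hb l hl).ne
        rw [cnt_insert hbJ, cnt_insert hbJ, if_pos hj, if_pos (hb l hl),
          Finset.erase_insert_of_ne hlb, Finset.insert_comm, qMinor_insert (b := b),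
          add_sub_add_right_eq_sub]
        · intro x hx
          rcases Finset.mem_insert.1 hx with rfl | hx
          · exact hj
          · exact hbe l x hx
        · rw [Finset.card_insert_of_notMem (by simp [hjJ]), hcard l hl]
      · rfl

/-! ### The induction -/

/-- The commutation relation, by induction on `J` adding a new least element `b`. -/
lemma commutation (hq : q ≠ 0) (i : Fin n) (J : Finset (Fin n)) :
    ∀ (j : Fin n) (I : Finset (Fin n)), I.card = J.card →
    rowR q i I (fun l K => X k n q l j * qMinor k n q K J) =
      colR q j J (fun l K => qMinor k n q I K * X k n q i l) := by
  induction J using Finset.induction_on_min with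
  | empty =>
    intro j I hI
    obtain rfl : I = ∅ := by simpa using hI
    have : qMinor k n q ∅ ∅ = 1 := by
      rw [qMinor_eq (t := 0) rfl rfl, minorFn]
      simp [inversions]
    simp [rowR, colR, this]
  | insert b J hb ih =>
    intro j I hI
    have hbJ : b ∉ J := fun hh => lt_irrefl _ (hb b hh)
    rw [Finset.card_insert_of_notMem hbJ] at hI
    rw [← col_hex hq i j hb hI]
    have h1 : rowR q i I (fun l K => X k n q l j * qMinor k n q K (insert b J)) =
        rowR q i I (fun i' I' => lap q I' fun a K =>
          X k n q i' j * X k n q a b * qMinor k n q K J) := by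
      refine rowR_congr fun a K hK => ?_
      rw [qMinor_insert hb (hK.trans hI), colExp]
      exact (lap_map (LinearMap.mulLeft k (X k n q a j)) _ _).trans
        (by simp only [LinearMap.mulLeft_apply, mul_assoc])
    rw [h1, row_hex hq]
    have h2 : ∀ (i₁ a : Fin n) (K : Finset (Fin n)),
        rowP q i₁ a (fun i' a' => X k n q i' j * X k n q a' b * qMinor k n q K J) =
        colP q j b (fun j' b' => X k n q a b' * (X k n q i₁ j' * qMinor k n q K J)) := by
      intro i₁ a K
      have := congrArg (· * qMinor k n q K J) (X_rtt hq i₁ a j b)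
      simpa only [rowP, colP, add_mul, smul_mul_assoc, mul_assoc] using this
    simp only [h2]
    simp only [colP, rowR_add, rowR_smul, lap_add, lap_smul]
    have h3 : ∀ j₁ b₁ : Fin n, (lap q I fun a K₀ => rowR q i K₀ fun i₁ K =>
        X k n q a b₁ * (X k n q i₁ j₁ * qMinor k n q K J)) =
        colR q j₁ J fun l K => colExp q I b₁ K * X k n q i l := by
      intro j₁ b₁
      have h4 : (lap q I fun a K₀ => rowR q i K₀ fun i₁ K =>
          X k n q a b₁ * (X k n q i₁ j₁ * qMinor k n q K J)) =
          lap q I fun a K₀ => colR q j₁ J fun l K =>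
            X k n q a b₁ * qMinor k n q K₀ K * X k n q i l := by
        refine lap_congr fun a ha => ?_
        have h5 := congrArg (LinearMap.mulLeft k (X k n q a b₁)) (ih j₁ (I.erase a)
          (by rw [Finset.card_erase_of_mem ha, hI]; rfl))
        rw [rowR_map, colR_map] at h5
        simpa only [LinearMap.mulLeft_apply, mul_assoc] using h5
      rw [h4]
      have h6 : ∀ l K, colExp q I b₁ K * X k n q i l =
          lap q I fun a K₀ => X k n q a b₁ * qMinor k n q K₀ K * X k n q i l := fun l K =>
        lap_map (LinearMap.mulRight k (X k n q i l)) _ _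
      simp only [h6, colR, lap_add, lap_smul, lap_sum]
    rw [h3, h3]

end Algebra
end QMat

open QMat

/-- The commutation relation (3.2) between a generator `X_{ij}` and a quantum minor `[I|J]`. -/
theorem stmt8 (k : Type*) [Field k] (n : ℕ) (hn : 0 < n) (q : k) (hq : q ≠ 0)
    (i j : Fin n) (I J : Finset (Fin n)) (hIJ : I.card = J.card) :
    (q ^ (if i ∈ I then 1 else 0)) • (X k n q i j * qMinor k n q I J)
      + ((if i ∈ I then (0 : k) else 1) * (q - q⁻¹)) •
          ∑ l ∈ I.filter (fun l => l < i),
            ((-q) ^ (-(((I.filter fun x => l < x ∧ x < i).card : ℤ)))) •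
              (X k n q l j * qMinor k n q (insert i (I.erase l)) J)
    = (q ^ (if j ∈ J then 1 else 0)) • (qMinor k n q I J * X k n q i j)
      + ((if j ∈ J then (0 : k) else 1) * (q - q⁻¹)) •
          ∑ l ∈ J.filter (fun l => j < l),
            ((-q) ^ (-(((J.filter fun x => j < x ∧ x < l).card : ℤ)))) •
              (qMinor k n q I (insert j (J.erase l)) * X k n q i l) := by
  exact commutation hq i J j I hIJ

end
end

section
/- Let I,J,M,N ⊆ {1,…,n} with |I| = |J| and |M| = |N|. Suppose I ⊆ M and that J and N are separated, i.e., J = J′ ⊔ J″ where every element of J′ is strictly less than every element of N and every element of N is strictly less than every element of J″. Then [I|J][M|N] = q^{|J′| − |J″|} [M|N][I|J] in A. -/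
/-!
A single generator `X i j` with `i ∈ M` already quasicommutes with `[M|N]`, with factor `q` if `j`
lies to the left of `N` and `q⁻¹` if it lies to the right. Since every row index of `[I|J]` belongs
to `M`, the theorem follows by moving `[M|N]` through each monomial of `[I|J]`, one generator at a
time (`prod_ofFn_mul`).

For a generator, induct on the columns of `N`, expanding `[M|N]` along its first column
(`sum_perm_eq_lap`). The induction has to carry along the case `i ∉ M`, where for `j` to the left
of `N`, with `Q = -q`,
`X i j [M|N] = [M|N] X i j + (q - q⁻¹) ∑ Q ^ (-d l) [M \ {l} ∪ {i}|N] X l j`,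
the sum being over `l ∈ M` with `l > i`, and `d l` the number of elements of `M` strictly between
`i` and `l`. In both cases (`passIn_step`, `passOut_step`) the corrections match because the sum of
`Q ^ (2 t) - Q ^ (2 t + 2)` over consecutive `t` telescopes (`sum_kap`).

For `j` to the right of `N`, the crossing relations are those of the first case with the order of
the rows reversed and `q` replaced by `q⁻¹`, and these changes only rescale the expansion of
`[M|N]` (`lap_swap`). The induction is therefore done for an arbitrary strict total order on
the rows.
-/

open scoped TensorProduct
open scoped Classical

noncomputable section

open QMat

/-! ### Counting predecessors in a finite set of rows -/

namespace QMat.Aux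

variable {k ι κ R : Type*} [Field k] [DecidableEq ι] [Ring R] [Algebra k R]

/-- The number of elements of `M` that precede `a` for `r`, as an integer. -/
def cnt (r : ι → ι → Prop) (M : Finset ι) (a : ι) : ℤ := ((M.filter fun b => r b a).card : ℤ)

/-- The minor with rows `M` and columns `cs`, defined by repeated expansion along the first column
with weights powers of `Q`; it is `0` when `M` and `cs` have different sizes. With `r = (<)` and
`Q = -q` this is the quantum minor; the order `r` is a parameter so that rows can be reversed. -/
def lap (r : ι → ι → Prop) (Q : k) (x : ι → κ → R) : List κ → Finset ι → R
  | [], M => if M = ∅ then 1 else 0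
  | c :: cs, M => ∑ a ∈ M, Q ^ cnt r M a • (x a c * lap r Q x cs (M.erase a))

lemma cnt_erase (r : ι → ι → Prop) {M : Finset ι} {a : ι} (ha : a ∈ M) (b : ι) :
    cnt r (M.erase a) b = cnt r M b - if r a b then 1 else 0 := by
  unfold cnt
  rw [Finset.filter_erase]
  split_ifs with h
  · rw [Finset.card_erase_of_mem (by simp [ha, h])]
    have : 0 < (M.filter fun t => r t b).card := Finset.card_pos.2 ⟨a, by simp [ha, h]⟩
    omega
  · rw [Finset.erase_eq_of_notMem (by simp [h])]; simp

lemma cnt_insert (r : ι → ι → Prop) {M : Finset ι} {a : ι} (ha : a ∉ M) (b : ι) :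
    cnt r (insert a M) b = cnt r M b + if r a b then 1 else 0 := by
  unfold cnt
  rw [Finset.filter_insert]
  split_ifs with h
  · rw [Finset.card_insert_of_notMem (by simp [ha])]; push_cast; rfl
  · simp

variable {r : ι → ι → Prop} [IsStrictTotalOrder ι r]

lemma cnt_lt {ι : Type*} {r : ι → ι → Prop} [IsStrictTotalOrder ι r] {M : Finset ι} {a b : ι}
    (ha : a ∈ M) (h : r a b) : cnt r M a < cnt r M b := by
  unfold cnt
  have : (M.filter fun t => r t a) ⊂ M.filter fun t => r t b := by
    refine Finset.ssubset_iff_of_subset ?_ |>.2 ⟨a, by simp [ha, h], by simp [irrefl_of r a]⟩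
    intro t ht
    simp only [Finset.mem_filter] at ht ⊢
    exact ⟨ht.1, trans_of r ht.2 h⟩
  exact_mod_cast Finset.card_lt_card this

/-- Listed in increasing order, the elements of `M` below `l` have `0, 1, 2, …` predecessors. -/
lemma sum_cnt_below (M : Finset ι) (l : ι) (f : ℤ → k) :
    ∑ a ∈ M.filter (fun a => r a l), f (cnt r M a) =
      ∑ t ∈ Finset.range (M.filter fun a => r a l).card, f (t : ℤ) := by
  set B := M.filter fun a => r a l with hB
  have hinj : Set.InjOn (fun a => (M.filter fun b => r b a).card) (B : Set ι) := by
    intro a ha b hb hab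
    simp only [hB, Finset.coe_filter, Set.mem_ofPred_eq] at ha hb
    rcases trichotomous_of r a b with h | h | h
    · have := cnt_lt ha.1 h
      simp only [cnt] at this
      simp only at hab
      omega
    · exact h
    · have := cnt_lt hb.1 h
      simp only [cnt] at this
      simp only at hab
      omega
  have himg : B.image (fun a => (M.filter fun b => r b a).card) = Finset.range B.card := by
    apply Finset.eq_of_subset_of_card_le
    · intro t ht
      obtain ⟨a, ha, rfl⟩ := Finset.mem_image.1 ht
      simp only [hB, Finset.mem_filter] at ha
      have := cnt_lt ha.1 ha.2
      simp only [cnt] at this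
      rw [Finset.mem_range]
      exact_mod_cast this
    · rw [Finset.card_image_of_injOn hinj, Finset.card_range]
  rw [← himg, Finset.sum_image hinj]
  rfl

lemma telescope_below (M : Finset ι) (l : ι) (g : ℤ → k) :
    ∑ a ∈ M.filter (fun a => r a l), (g (cnt r M a) - g (cnt r M a + 1)) =
      g 0 - g (cnt r M l) := by
  rw [sum_cnt_below M l fun t => g t - g (t + 1)]
  have := Finset.sum_range_sub' (fun t : ℕ => g (t : ℤ)) (M.filter fun a => r a l).card
  simpa [cnt] using this

lemma telescope_between (M : Finset ι) {i l : ι} (hil : r i l) (g : ℤ → k) :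
    ∑ a ∈ M.filter (fun a => r i a ∧ r a l), (g (cnt r M a) - g (cnt r M a + 1)) =
      g (cnt r M i + if i ∈ M then 1 else 0) - g (cnt r M l) := by
  have h1 := telescope_below (r := r) M l g
  have h2 := telescope_below (r := r) M i g
  rw [Finset.sum_filter] at h1 h2 ⊢
  have h3 : ∑ a ∈ M, (if a = i then g (cnt r M a) - g (cnt r M a + 1) else 0) =
      if i ∈ M then g (cnt r M i) - g (cnt r M i + 1) else 0 := by
    rw [Finset.sum_ite_eq']
  have h4 : ∀ a ∈ M, (if r a l then g (cnt r M a) - g (cnt r M a + 1) else 0) =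
      (if r i a ∧ r a l then g (cnt r M a) - g (cnt r M a + 1) else 0)
      + (if r a i then g (cnt r M a) - g (cnt r M a + 1) else 0)
      + (if a = i then g (cnt r M a) - g (cnt r M a + 1) else 0) := by
    intro a _
    rcases trichotomous_of r a i with h | h | h
    · have e1 : r a l := trans_of r h hil
      have e2 : ¬ r i a := asymm_of r h
      have e3 : a ≠ i := by rintro rfl; exact irrefl_of r _ h
      simp [e1, e2, e3, h]
    · subst h
      simp [hil, irrefl_of r a]
    · have e2 : ¬ r a i := asymm_of r h
      have e3 : a ≠ i := by rintro rfl; exact irrefl_of r _ h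
      simp [h, e2, e3]
  rw [Finset.sum_congr rfl h4, Finset.sum_add_distrib, Finset.sum_add_distrib, h2, h3] at h1
  split_ifs at h1 ⊢ <;> try simp only [add_zero] at h1 ⊢
  all_goals linear_combination h1

/-- Let a generator in row `i` cross the term of row `a` in a column expansion over `M`. Then
`kap r Q M i a l` is the coefficient of `x i * (P (M.erase l) * y l)` produced by the correction
`(Q⁻¹ - Q) • (x i * y a)` of the mixed relation, once `y a` has crossed `P (M.erase a)`. -/
def kap (r : ι → ι → Prop) (Q : k) (M : Finset ι) (i a l : ι) : k :=
  if r i a then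
    (if l = a then Q ^ cnt r M a * (Q⁻¹ - Q)
     else if r a l then
      Q ^ cnt r M a * (Q⁻¹ - Q) * ((Q⁻¹ - Q) * Q ^ (cnt r M a - cnt r M l + 1)) else 0)
  else 0

/-- The total of these coefficients telescopes. -/
lemma sum_kap {Q : k} (hQ : Q ≠ 0) (M : Finset ι) {i l : ι} (hil : r i l) (hl : l ∈ M) :
    ∑ a ∈ M, kap r Q M i a l =
      (Q⁻¹ - Q) * Q ^ (2 * (cnt r M i + if i ∈ M then 1 else 0) - cnt r M l) := by
  have h := telescope_between M hil fun t => Q ^ (2 * t)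
  have e : ∀ a ∈ M, kap r Q M i a l = (if l = a then Q ^ cnt r M l * (Q⁻¹ - Q) else 0) +
      (Q⁻¹ - Q) * Q ^ (- cnt r M l) *
        (if r i a ∧ r a l then Q ^ (2 * cnt r M a) - Q ^ (2 * (cnt r M a + 1)) else 0) := by
    intro a _
    unfold kap
    by_cases h1 : l = a
    · subst h1; simp [hil, irrefl_of r l]
    by_cases h2 : r i a <;> by_cases h3 : r a l <;> simp only [h1, h2, h3, if_true, if_false,
      and_self, and_true, and_false, mul_zero, add_zero, zero_add]
    rw [zpow_neg, zpow_add₀ hQ, zpow_sub₀ hQ, mul_add, zpow_add₀ hQ, two_mul, zpow_add₀ hQ]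
    have := zpow_ne_zero (cnt r M l) hQ
    simp only [mul_one, zpow_one]
    norm_num [zpow_ofNat]
    field_simp
  rw [Finset.sum_congr rfl e, Finset.sum_add_distrib, ← Finset.mul_sum,
    Finset.sum_ite_eq, if_pos hl, ← Finset.sum_filter, h, mul_assoc, mul_sub (Q ^ (-cnt r M l)),
    ← zpow_add₀ hQ, ← zpow_add₀ hQ]
  rw [show -cnt r M l + 2 * cnt r M l = cnt r M l by ring,
   show ∀ z : ℤ, - cnt r M l + z = z - cnt r M l by intro z; ring]
  ring

end QMat.Aux

/-! ### A column entry crossing a minor -/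

namespace QMat.Aux

variable {k ι κ R : Type*} [Field k] [DecidableEq ι] [Ring R] [Algebra k R]

/-- The relations that let a column `y` of a quantum matrix move past another column `x`, for rows
ordered by `r`. With `Q = -q` and `r = (<)` they hold when `y` stands to the left of `x`; with
`Q = (-q)⁻¹` and `r = (>)` they hold when `y` stands to the right of `x`. -/
structure Cross (r : ι → ι → Prop) (Q : k) (y x : ι → R) : Prop where
  same : ∀ i, y i * x i = (-Q) • (x i * y i)
  lower : ∀ i a, r a i → y i * x a = x a * y i
  upper : ∀ i a, r i a → y i * x a = x a * y i + (Q⁻¹ - Q) • (x i * y a)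

/-- The entries of the column `y` in a row of `M` commute with `P M` up to the factor `-Q`. -/
def PassIn (Q : k) (y : ι → R) (P : Finset ι → R) : Prop :=
  ∀ M i, i ∈ M → y i * P M = (-Q) • (P M * y i)

/-- How the entries of the column `y` in a row outside `M` cross `P M`: each correction term trades
a row `l` of `M` coming after `i` for the row `i`. -/
def PassOut (r : ι → ι → Prop) (Q : k) (y : ι → R) (P : Finset ι → R) : Prop :=
  ∀ M i, i ∉ M → y i * P M = P M * y i +
    ∑ l ∈ M.filter (fun l => r i l),
      ((Q⁻¹ - Q) * Q ^ (cnt r M i - cnt r M l)) • (P (insert i (M.erase l)) * y l)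

variable {r : ι → ι → Prop} [IsStrictTotalOrder ι r]

/-- The case of `PassOut` in which the trade of rows happens inside a set `M` containing `a`. -/
lemma passOut_erase {Q : k} {y : ι → R} {P : Finset ι → R} (h : PassOut r Q y P)
    {M : Finset ι} {a : ι} (ha : a ∈ M) :
    y a * P (M.erase a) = P (M.erase a) * y a +
      ∑ l ∈ M.filter (fun l => r a l),
        ((Q⁻¹ - Q) * Q ^ (cnt r M a - cnt r M l + 1)) • (P (M.erase l) * y l) := by
  have hf : (M.erase a).filter (fun l => r a l) = M.filter (fun l => r a l) := by
    rw [Finset.filter_erase, Finset.erase_eq_of_notMem (by simp [irrefl_of r a])]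
  rw [h _ a (Finset.notMem_erase a M), hf]
  congr 1
  refine Finset.sum_congr rfl fun l hl => ?_
  obtain ⟨hlM, hal⟩ := Finset.mem_filter.1 hl
  have hne : l ≠ a := by rintro rfl; exact irrefl_of r _ hal
  rw [Finset.erase_right_comm, Finset.insert_erase (by simp [ha, hne.symm]),
    cnt_erase r ha, cnt_erase r ha, if_pos hal, if_neg (irrefl_of r a)]
  congr 3
  ring

/-- The correction term of the mixed relation, expanded by means of `PassOut`. -/
lemma sum_kap_passOut {Q : k} {y x : ι → R} {P : Finset ι → R} (h2 : PassOut r Q y P)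
    {M : Finset ι} {i a : ι} (ha : a ∈ M) (h : r i a) :
    ∑ l ∈ M.filter (fun l => r i l), kap r Q M i a l • (x i * (P (M.erase l) * y l)) =
      (Q ^ cnt r M a * (Q⁻¹ - Q)) • (x i * (y a * P (M.erase a))) := by
  have ham : a ∈ M.filter (fun l => r i l) := by simp [ha, h]
  have e : ∀ l ∈ M.filter (fun l => r i l), kap r Q M i a l • (x i * (P (M.erase l) * y l)) =
      (if a = l then (Q ^ cnt r M a * (Q⁻¹ - Q)) • (x i * (P (M.erase l) * y l)) else 0) +
      (if r a l then (Q ^ cnt r M a * (Q⁻¹ - Q)) •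
        (x i * (((Q⁻¹ - Q) * Q ^ (cnt r M a - cnt r M l + 1)) • (P (M.erase l) * y l)))
        else 0) := by
    intro l _
    unfold kap
    rw [if_pos h]
    by_cases hla : l = a
    · subst hla; simp [irrefl_of r l]
    · rw [if_neg hla, if_neg (Ne.symm hla), zero_add]
      split_ifs
      · rw [mul_smul_comm, smul_smul]
      · rw [zero_smul]
  have hf : M.filter (fun l => r i l ∧ r a l) = M.filter (fun l => r a l) :=
    Finset.filter_congr fun l _ => ⟨fun t => t.2, fun t => ⟨trans_of r h t, t⟩⟩
  rw [passOut_erase h2 ha, mul_add, smul_add, Finset.mul_sum, Finset.smul_sum,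
    Finset.sum_congr rfl e, Finset.sum_add_distrib, Finset.sum_ite_eq, if_pos ham,
    ← Finset.sum_filter, Finset.filter_filter, hf]

/-- `PassIn` survives adding a column. The corrections arising from row `a = i` of the expansion
cancel against those arising from the rows after `i`. -/
lemma passIn_step {Q : k} (hQ : Q ≠ 0) {y x : ι → R} {P : Finset ι → R}
    (hx : Cross r Q y x) (h1 : PassIn Q y P) (h2 : PassOut r Q y P) :
    PassIn Q y fun M => ∑ a ∈ M, Q ^ cnt r M a • (x a * P (M.erase a)) := by
  intro M i hi
  have key : ∀ a ∈ M, y i * (Q ^ cnt r M a • (x a * P (M.erase a))) =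
      (-Q) • ((Q ^ cnt r M a • (x a * P (M.erase a))) * y i) +
      ∑ l ∈ M.filter (fun l => r i l), (kap r Q M i a l +
        if a = i then Q ^ cnt r M i * (-Q) * ((Q⁻¹ - Q) * Q ^ (cnt r M i - cnt r M l + 1))
        else 0) • (x i * (P (M.erase l) * y l)) := by
    intro a ha
    rw [mul_smul_comm, ← mul_assoc]
    rcases trichotomous_of r a i with h | h | h
    · have hne : a ≠ i := by rintro rfl; exact irrefl_of r _ h
      have : ∀ l, kap r Q M i a l = 0 := fun l => by
        unfold kap; rw [if_neg (asymm_of r h)]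
      simp only [this, hne, if_false, add_zero, zero_smul, Finset.sum_const_zero]
      rw [hx.lower i a h, mul_assoc, h1 _ i (by simp [hi, hne.symm]), mul_smul_comm,
        smul_mul_assoc, mul_assoc, smul_comm]
    · subst h
      have : ∀ l, kap r Q M a a l = 0 := fun l => by
        unfold kap; rw [if_neg (irrefl_of r a)]
      simp only [this, if_true, zero_add]
      rw [hx.same, smul_mul_assoc, mul_assoc, passOut_erase h2 hi, mul_add, smul_add, smul_add,
        smul_mul_assoc, mul_assoc, smul_comm]
      congr 1
      rw [Finset.mul_sum, Finset.smul_sum, Finset.smul_sum]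
      refine Finset.sum_congr rfl fun l _ => ?_
      rw [mul_smul_comm, smul_smul, smul_smul]
    · have hne : a ≠ i := by rintro rfl; exact irrefl_of r _ h
      rw [hx.upper i a h, add_mul, mul_assoc, h1 _ i (by simp [hi, hne.symm]), mul_smul_comm,
        smul_add, smul_mul_assoc, mul_assoc, smul_comm, smul_mul_assoc, mul_assoc]
      congr 1
      simp only [if_neg hne, add_zero]
      rw [sum_kap_passOut h2 ha h, smul_smul]
  simp only
  rw [Finset.mul_sum, Finset.sum_congr rfl key, Finset.sum_add_distrib, ← Finset.smul_sum,
    ← Finset.sum_mul, Finset.sum_comm]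
  rw [add_eq_left]
  refine Finset.sum_eq_zero fun l hl => ?_
  obtain ⟨hlM, hil⟩ := Finset.mem_filter.1 hl
  rw [← Finset.sum_smul, Finset.sum_add_distrib, sum_kap hQ M hil hlM, Finset.sum_ite_eq',
    if_pos hi, if_pos hi]
  convert zero_smul k _
  have e : (2 * (cnt r M i + 1) - cnt r M l) = cnt r M i + 1 + (cnt r M i - cnt r M l + 1) := by
    ring
  rw [e, zpow_add₀ hQ, zpow_add₀ hQ (cnt r M i) 1, zpow_one]
  ring

/-- `PassOut` survives adding a column. The corrections that `y i` itself leaves behind give the terms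
of the new expansions in rows other than `i`, those of the mixed relation give the terms in
row `i`. -/
lemma passOut_step {Q : k} (hQ : Q ≠ 0) {y x : ι → R} {P : Finset ι → R}
    (hx : Cross r Q y x) (h2 : PassOut r Q y P) :
    PassOut r Q y fun M => ∑ a ∈ M, Q ^ cnt r M a • (x a * P (M.erase a)) := by
  intro M i hi
  have key : ∀ a ∈ M, y i * (Q ^ cnt r M a • (x a * P (M.erase a))) =
      (Q ^ cnt r M a • (x a * P (M.erase a))) * y i +
      (∑ l ∈ M.filter (fun l => r i l), (if l = a then 0 else
        ((Q⁻¹ - Q) * Q ^ (cnt r M i - cnt r M l) * Q ^ cnt r (insert i (M.erase l)) a) •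
          (x a * (P ((insert i (M.erase l)).erase a) * y l))) +
      ∑ l ∈ M.filter (fun l => r i l), kap r Q M i a l • (x i * (P (M.erase l) * y l))) := by
    intro a ha
    have hai : a ≠ i := by rintro rfl; exact hi ha
    have hout : Q ^ cnt r M a • (x a * (y i * P (M.erase a))) =
        (Q ^ cnt r M a • (x a * P (M.erase a))) * y i +
        ∑ l ∈ M.filter (fun l => r i l), (if l = a then 0 else
          ((Q⁻¹ - Q) * Q ^ (cnt r M i - cnt r M l) * Q ^ cnt r (insert i (M.erase l)) a) •
            (x a * (P ((insert i (M.erase l)).erase a) * y l))) := by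
      rw [h2 _ i (by simp [hi]), mul_add, smul_add, smul_mul_assoc, mul_assoc]
      congr 1
      rw [Finset.filter_erase, Finset.mul_sum, Finset.smul_sum]
      have hs : ∑ l ∈ M.filter (fun l => r i l), (if l = a then 0 else
          ((Q⁻¹ - Q) * Q ^ (cnt r M i - cnt r M l) * Q ^ cnt r (insert i (M.erase l)) a) •
            (x a * (P ((insert i (M.erase l)).erase a) * y l))) =
          ∑ l ∈ (M.filter (fun l => r i l)).erase a, (if l = a then 0 else
          ((Q⁻¹ - Q) * Q ^ (cnt r M i - cnt r M l) * Q ^ cnt r (insert i (M.erase l)) a) •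
            (x a * (P ((insert i (M.erase l)).erase a) * y l))) :=
        (Finset.sum_erase _ (by simp)).symm
      rw [hs]
      refine Finset.sum_congr rfl fun l hl => ?_
      obtain ⟨hla, hl⟩ := Finset.mem_erase.1 hl
      obtain ⟨hlM, hil⟩ := Finset.mem_filter.1 hl
      rw [if_neg hla, mul_smul_comm, smul_smul, Finset.erase_right_comm,
        Finset.erase_insert_of_ne hai.symm]
      congr 1
      rw [cnt_insert r (by simp [hi]), cnt_erase r hlM, cnt_erase r ha, cnt_erase r ha]
      rw [mul_left_comm, mul_assoc, ← zpow_add₀ hQ, ← zpow_add₀ hQ]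
      congr 2
      rcases trichotomous_of r a i with h | h | h
      · have e1 : r a l := trans_of r h hil
        simp [e1, asymm_of r e1, h, asymm_of r h]
        ring
      · exact absurd h hai
      · rcases trichotomous_of r a l with h' | h' | h'
        · simp [h, h', asymm_of r h, asymm_of r h']; ring
        · exact absurd h'.symm hla
        · simp [h, h', asymm_of r h, asymm_of r h']; ring
    rw [mul_smul_comm, ← mul_assoc]
    rcases trichotomous_of r a i with h | h | h
    · have : ∀ l, kap r Q M i a l = 0 := fun l => by
        unfold kap; rw [if_neg (asymm_of r h)]
      simp only [this, zero_smul, Finset.sum_const_zero, add_zero]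
      rw [hx.lower i a h, mul_assoc, hout]
    · exact absurd h hai
    · rw [hx.upper i a h, add_mul, mul_assoc, smul_add, hout, add_assoc]
      congr 2
      rw [smul_mul_assoc, mul_assoc, sum_kap_passOut h2 ha h, smul_smul]
  simp only
  rw [Finset.mul_sum, Finset.sum_congr rfl key, Finset.sum_add_distrib, ← Finset.sum_mul]
  congr 1
  rw [Finset.sum_add_distrib, Finset.sum_comm,
    Finset.sum_comm (f := fun a l => kap r Q M i a l • (x i * (P (M.erase l) * y l))),
    ← Finset.sum_add_distrib]
  refine Finset.sum_congr rfl fun l hl => ?_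
  obtain ⟨hlM, hil⟩ := Finset.mem_filter.1 hl
  rw [← Finset.sum_smul, sum_kap hQ M hil hlM, if_neg hi, Finset.sum_insert (by simp [hi]),
    Finset.erase_insert (by simp [hi]), add_mul, smul_add, add_comm]
  congr 1
  · rw [smul_mul_assoc, mul_assoc, smul_smul, mul_assoc, ← zpow_add₀ hQ,
      cnt_insert r (by simp [hi]), cnt_erase r hlM, if_neg (asymm_of r hil),
      if_neg (irrefl_of r i)]
    congr 3
    ring
  · rw [← Finset.sum_erase M (a := l) (by simp), Finset.sum_mul, Finset.smul_sum]
    refine Finset.sum_congr rfl fun a ha => ?_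
    rw [if_neg (Finset.mem_erase.1 ha).1.symm, smul_mul_assoc, smul_smul, mul_assoc (x a)]

lemma pass_lap {Q : k} (hQ : Q ≠ 0) {y : ι → R} {x : ι → κ → R} (cs : List κ)
    (hx : ∀ c ∈ cs, Cross r Q y fun a => x a c) :
    PassIn Q y (lap r Q x cs) ∧ PassOut r Q y (lap r Q x cs) := by
  induction cs with
  | nil =>
    constructor
    · intro M i hi
      have : M ≠ ∅ := Finset.ne_empty_of_mem hi
      simp [lap, this]
    · intro M i hi
      by_cases hM : M = ∅
      · subst hM; simp [lap]
      · simp [lap, hM]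
  | cons c cs ih =>
    obtain ⟨h1, h2⟩ := ih fun d hd => hx d (List.mem_cons_of_mem _ hd)
    exact ⟨passIn_step hQ (hx c List.mem_cons_self) h1 h2,
      passOut_step hQ (hx c List.mem_cons_self) h2⟩

end QMat.Aux

/-! ### Quantum minors as iterated column expansions -/

namespace QMat.Aux

/-- The permutation of `Fin (m + 1)` sending `0` to `p` and acting on the remaining indices by `τ`,
with the values renumbered in increasing order so as to skip `p`. Unlike
`Equiv.Perm.decomposeFin`, this keeps inversions under control. -/
def glue {m : ℕ} (p : Fin (m + 1)) (τ : Equiv.Perm (Fin m)) : Equiv.Perm (Fin (m + 1)) :=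
  ((finSuccEquiv' 0).trans (Equiv.optionCongr τ)).trans (finSuccEquiv' p).symm

lemma glue_zero {m : ℕ} (p : Fin (m + 1)) (τ : Equiv.Perm (Fin m)) : glue p τ 0 = p := by
  simp [glue]

lemma glue_succ {m : ℕ} (p : Fin (m + 1)) (τ : Equiv.Perm (Fin m)) (t : Fin m) :
    glue p τ t.succ = p.succAbove (τ t) := by
  have : finSuccEquiv' (0 : Fin (m + 1)) t.succ = some t := by
    rw [← Fin.succAbove_zero_apply, finSuccEquiv'_succAbove]
  simp [glue, this]

lemma glue_bijective (m : ℕ) :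
    Function.Bijective fun z : Fin (m + 1) × Equiv.Perm (Fin m) => glue z.1 z.2 := by
  rw [Fintype.bijective_iff_injective_and_card]
  constructor
  · rintro ⟨p, τ⟩ ⟨p', τ'⟩ h
    simp only at h
    have hp : p = p' := by rw [← glue_zero p τ, ← glue_zero p' τ', h]
    subst hp
    have : τ = τ' := by
      ext t : 1
      have := congrArg (fun e : Equiv.Perm (Fin (m + 1)) => e t.succ) h
      simp only [glue_succ] at this
      exact Fin.succAbove_right_injective this
    rw [this]
  · simp [Fintype.card_perm, Nat.factorial_succ]

lemma inversions_eq_sum {m : ℕ} (σ : Equiv.Perm (Fin m)) :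
    inversions σ = ∑ a, ∑ b, if a < b ∧ σ b < σ a then 1 else 0 := by
  rw [inversions, Finset.card_filter, Fintype.sum_prod_type]

lemma card_succAbove_lt {m : ℕ} (p : Fin (m + 1)) :
    (Finset.univ.filter fun t : Fin m => p.succAbove t < p).card = p := by
  have : ∀ t : Fin m, p.succAbove t < p ↔ (t : ℕ) < p := by
    intro t
    rw [Fin.succAbove_lt_iff_castSucc_lt, Fin.lt_def]; rfl
  simp only [this]
  rw [Fin.card_filter_val_lt]
  omega

lemma inversions_glue {m : ℕ} (p : Fin (m + 1)) (τ : Equiv.Perm (Fin m)) :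
    inversions (glue p τ) = p + inversions τ := by
  rw [inversions_eq_sum, inversions_eq_sum, Fin.sum_univ_succ]
  congr 1
  · rw [Fin.sum_univ_succ]
    simp only [glue_zero, glue_succ, lt_self_iff_false, false_and, if_false, zero_add,
      Fin.succ_pos, true_and]
    rw [Equiv.sum_comp τ (fun t => if p.succAbove t < p then 1 else 0), ← Finset.card_filter,
      card_succAbove_lt]
  · refine Finset.sum_congr rfl fun a _ => ?_
    rw [Fin.sum_univ_succ]
    simp [glue_succ, Fin.succAbove_lt_succAbove_iff]

lemma cnt_image {ι : Type*} [LinearOrder ι] {m : ℕ} (e : Fin m → ι) (he : StrictMono e)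
    (p : Fin m) : cnt (· < ·) (Finset.univ.image e) (e p) = p := by
  have h : (Finset.univ.image e).filter (fun b => b < e p) =
      (Finset.univ.filter fun t => t < p).image e := by
    rw [Finset.filter_image]
    simp only [he.lt_iff_lt]
  have h' : (Finset.univ.filter fun t => t < p).card = (p : ℕ) := by
    rw [Finset.filter_gt_eq_Iio, Fin.card_Iio]
  rw [← h', ← Finset.card_image_of_injective _ he.injective, ← h]
  unfold cnt
  congr

lemma erase_image {ι : Type*} [LinearOrder ι] {m : ℕ} (e : Fin (m + 1) → ι) (he : StrictMono e)
    (p : Fin (m + 1)) :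
    (Finset.univ.image e).erase (e p) = Finset.univ.image (e ∘ p.succAbove) := by
  ext a
  simp only [Finset.mem_erase, Finset.mem_image, Finset.mem_univ, true_and, Function.comp]
  constructor
  · rintro ⟨hne, t, rfl⟩
    obtain ⟨s, hs⟩ := Fin.exists_succAbove_eq (x := t) (y := p) (by rintro rfl; exact hne rfl)
    exact ⟨s, by rw [hs]⟩
  · rintro ⟨t, rfl⟩
    exact ⟨fun h => Fin.succAbove_ne p t (he.injective h), _, rfl⟩

/-- The Laplace expansion along the first column: the sum over permutations defining a quantum
minor agrees with the recursive `lap`. It holds in any algebra, as no commutation is used. -/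
lemma sum_perm_eq_lap {k ι κ R : Type*} [Field k] [LinearOrder ι] [Ring R] [Algebra k R]
    (Q : k) (x : ι → κ → R) : ∀ (m : ℕ) (e : Fin m → ι) (_ : StrictMono e) (c : Fin m → κ),
    ∑ σ : Equiv.Perm (Fin m), Q ^ inversions σ • (List.ofFn fun l => x (e (σ l)) (c l)).prod =
      lap (· < ·) Q x (List.ofFn c) (Finset.univ.image e) := by
  intro m
  induction m with
  | zero =>
    intro e _ c
    simp [lap, inversions]
  | succ m ih =>
    intro e he c
    rw [← (glue_bijective m).sum_comp, Fintype.sum_prod_type, List.ofFn_succ, lap,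
      Finset.sum_image fun _ _ _ _ h => he.injective h]
    refine Finset.sum_congr rfl fun p _ => ?_
    rw [erase_image e he, ← ih _ (he.comp (Fin.strictMono_succAbove p)), cnt_image e he,
      Finset.mul_sum, Finset.smul_sum]
    refine Finset.sum_congr rfl fun τ _ => ?_
    simp only [inversions_glue, List.ofFn_succ, List.prod_cons, glue_zero, glue_succ,
      Function.comp]
    rw [mul_smul_comm, smul_smul, zpow_natCast, pow_add]

lemma cnt_lt_add_cnt_gt {ι : Type*} [LinearOrder ι] {M : Finset ι} {a : ι} (ha : a ∈ M) :
    cnt (· < ·) M a + cnt (· > ·) M a = (M.card : ℤ) - 1 := by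
  have h : M.card = (insert a (M.filter (fun b => b < a) ∪ M.filter (fun b => b > a))).card := by
    congr 1
    ext b
    simp only [Finset.mem_insert, Finset.mem_union, Finset.mem_filter]
    constructor
    · intro hb
      rcases lt_trichotomy b a with h | h | h
      · exact Or.inr (Or.inl ⟨hb, h⟩)
      · exact Or.inl h
      · exact Or.inr (Or.inr ⟨hb, h⟩)
    · rintro (rfl | h | h)
      exacts [ha, h.1, h.1]
  rw [Finset.card_insert_of_notMem (by simp), Finset.card_union_of_disjoint] at h
  · rw [h]
    unfold cnt
    push_cast
    rw [add_sub_cancel_right]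
  · rw [Finset.disjoint_filter]
    exact fun b _ h1 h2 => lt_asymm h1 h2

/-- Reversing the order of the rows and inverting `Q` only rescales the iterated expansion, because
an element of `M` has `|M| - 1` other elements before or after it. -/
lemma lap_swap {k ι κ R : Type*} [Field k] [LinearOrder ι] [Ring R] [Algebra k R]
    {Q : k} (hQ : Q ≠ 0) (x : ι → κ → R) (cs : List κ) :
    ∃ u : k, ∀ M : Finset ι, M.card = cs.length →
      lap (· < ·) Q x cs M = u • lap (· > ·) Q⁻¹ x cs M := by
  induction cs with
  | nil => exact ⟨1, fun M _ => by simp [lap]⟩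
  | cons c cs ih =>
    obtain ⟨u, hu⟩ := ih
    refine ⟨Q ^ (cs.length : ℤ) * u, fun M hM => ?_⟩
    rw [lap, lap, Finset.smul_sum]
    refine Finset.sum_congr rfl fun a ha => ?_
    have h := cnt_lt_add_cnt_gt ha
    rw [hM, List.length_cons] at h
    rw [hu _ (by rw [Finset.card_erase_of_mem ha, hM]; simp), mul_smul_comm, smul_smul, smul_smul,
      inv_zpow', mul_right_comm, ← zpow_add₀ hQ]
    congr 3
    push_cast at h
    linarith

end QMat.Aux

/-! ### Generators and quantum minors of `O_q(M_n(k))` -/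

namespace QMat.Aux

variable {k : Type*} [Field k] {n : ℕ} {q : k}

lemma X_col {i l : Fin n} (j : Fin n) (h : i < l) :
    X k n q i j * X k n q l j = q • (X k n q l j * X k n q i j) := by
  simpa [X] using RingQuot.mkAlgHom_rel k (Rel.col (q := q) (j := j) h)

lemma X_row (i : Fin n) {j m : Fin n} (h : j < m) :
    X k n q i j * X k n q i m = q • (X k n q i m * X k n q i j) := by
  simpa [X] using RingQuot.mkAlgHom_rel k (Rel.row (q := q) (i := i) h)

lemma X_swap {i j l m : Fin n} (h1 : i < l) (h2 : m < j) :
    X k n q i j * X k n q l m = X k n q l m * X k n q i j := by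
  simpa [X] using RingQuot.mkAlgHom_rel k (Rel.swap (q := q) h1 h2)

lemma X_mixed {i j l m : Fin n} (h1 : i < l) (h2 : j < m) :
    X k n q i j * X k n q l m = X k n q l m * X k n q i j +
      (q - q⁻¹) • (X k n q i m * X k n q l j) := by
  simpa [X] using RingQuot.mkAlgHom_rel k (Rel.mixed (q := q) h1 h2)

lemma cross_left {j c : Fin n} (h : j < c) :
    Cross (· < ·) (-q) (fun i => X k n q i j) fun i => X k n q i c where
  same i := by rw [neg_neg]; exact X_row i h
  lower i a hai := (X_swap hai h).symm
  upper i a hia := by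
    rw [X_mixed hia h, inv_neg, show -q⁻¹ - -q = q - q⁻¹ by ring]

lemma cross_right (hq : q ≠ 0) {j c : Fin n} (h : c < j) :
    Cross (· > ·) (-q)⁻¹ (fun i => X k n q i j) fun i => X k n q i c where
  same i := by
    rw [X_row i h, inv_neg, neg_neg, smul_smul, inv_mul_cancel₀ hq, one_smul]
  lower i a hai := X_swap hai h
  upper i a hia := by
    rw [X_mixed hia h, inv_inv, inv_neg, X_swap hia h, add_assoc, ← add_smul,
      show q - q⁻¹ + (-q - -q⁻¹) = 0 by ring, zero_smul, add_zero]

lemma qMinor_eq_lap {M N : Finset (Fin n)} (h : M.card = N.card) :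
    qMinor k n q M N = lap (· < ·) (-q) (X k n q)
      (List.ofFn fun l : Fin M.card => (↑((N.orderIsoOfFin h.symm) l) : Fin n)) M := by
  rw [qMinor, dif_pos h,
    sum_perm_eq_lap (-q) (X k n q) M.card (fun l => ↑((M.orderIsoOfFin rfl) l))
      (fun a b hab => (M.orderIsoOfFin rfl).strictMono hab)]
  congr 1
  ext a
  simp only [Finset.mem_image, Finset.mem_univ, true_and]
  constructor
  · rintro ⟨l, rfl⟩
    exact ((M.orderIsoOfFin rfl) l).2
  · intro ha
    exact ⟨(M.orderIsoOfFin rfl).symm ⟨a, ha⟩, by simp⟩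

lemma X_mul_qMinor_left (hq : q ≠ 0) {M N : Finset (Fin n)} (h : M.card = N.card) {i j : Fin n}
    (hi : i ∈ M) (hj : ∀ c ∈ N, j < c) :
    X k n q i j * qMinor k n q M N = q • (qMinor k n q M N * X k n q i j) := by
  have := (pass_lap (r := (· < ·)) (neg_ne_zero.2 hq) (y := fun i => X k n q i j)
    (x := X k n q) (List.ofFn fun l : Fin M.card => (↑((N.orderIsoOfFin h.symm) l) : Fin n))
    (by
      intro c hc
      obtain ⟨l, rfl⟩ := (List.mem_ofFn' _ _).1 hc
      exact cross_left (hj _ ((N.orderIsoOfFin h.symm) l).2))).1 M i hi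
  rw [qMinor_eq_lap h, this, neg_neg]

lemma X_mul_qMinor_right (hq : q ≠ 0) {M N : Finset (Fin n)} (h : M.card = N.card) {i j : Fin n}
    (hi : i ∈ M) (hj : ∀ c ∈ N, c < j) :
    X k n q i j * qMinor k n q M N = q⁻¹ • (qMinor k n q M N * X k n q i j) := by
  have hQ : -q ≠ 0 := neg_ne_zero.2 hq
  have := (pass_lap (r := (· > ·)) (inv_ne_zero hQ) (y := fun i => X k n q i j)
    (x := X k n q) (List.ofFn fun l : Fin M.card => (↑((N.orderIsoOfFin h.symm) l) : Fin n))
    (by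
      intro c hc
      obtain ⟨l, rfl⟩ := (List.mem_ofFn' _ _).1 hc
      exact cross_right hq (hj _ ((N.orderIsoOfFin h.symm) l).2))).1 M i hi
  obtain ⟨u, hu⟩ := lap_swap hQ (X k n q)
    (List.ofFn fun l : Fin M.card => (↑((N.orderIsoOfFin h.symm) l) : Fin n))
  rw [qMinor_eq_lap h, hu M (by simp), mul_smul_comm, this, inv_neg, neg_neg, smul_mul_assoc,
    smul_comm]

lemma prod_ofFn_mul {R : Type*} [Ring R] [Algebra k R] (D : R) :
    ∀ (m : ℕ) (x : Fin m → R) (g : Fin m → k), (∀ l, x l * D = g l • (D * x l)) →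
      (List.ofFn x).prod * D = (∏ l, g l) • (D * (List.ofFn x).prod) := by
  intro m
  induction m with
  | zero => intro x g _; simp
  | succ m ih =>
    intro x g h
    rw [List.ofFn_succ, List.prod_cons, mul_assoc, ih (fun l => x l.succ) (fun l => g l.succ)
      (fun l => h _), mul_smul_comm, ← mul_assoc, h, smul_mul_assoc, smul_smul, mul_assoc,
      Fin.prod_univ_succ, mul_comm (g 0)]

end QMat.Aux

/-- Quasicommutation (3.13) when `I ⊆ M` and `J`, `N` are separated. -/
theorem stmt9 (k : Type*) [Field k] (n : ℕ) (hn : 0 < n) (q : k) (hq : q ≠ 0)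
    (I J M N J1 J2 : Finset (Fin n)) (hIJ : I.card = J.card) (hMN : M.card = N.card)
    (hIM : I ⊆ M) (hJ : J = J1 ∪ J2) (hdisj : Disjoint J1 J2)
    (hsep1 : ∀ x ∈ J1, ∀ y ∈ N, x < y) (hsep2 : ∀ y ∈ N, ∀ z ∈ J2, y < z) :
    qMinor k n q I J * qMinor k n q M N =
      (q ^ ((J1.card : ℤ) - (J2.card : ℤ))) • (qMinor k n q M N * qMinor k n q I J) := by
  have hg : ∀ j ∈ J, ∀ i ∈ M, X k n q i j * qMinor k n q M N =
      (if j ∈ J1 then q else q⁻¹) • (qMinor k n q M N * X k n q i j) := by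
    intro j hj i hi
    split_ifs with h
    · exact Aux.X_mul_qMinor_left hq hMN hi (hsep1 j h)
    · have h2 : j ∈ J2 := by
        rw [hJ, Finset.mem_union] at hj
        exact hj.resolve_left h
      exact Aux.X_mul_qMinor_right hq hMN hi fun c hc => hsep2 c hc j h2
  have hprod : ∏ l : Fin I.card,
      (if (↑((J.orderIsoOfFin hIJ.symm) l) : Fin n) ∈ J1 then q else q⁻¹) =
      q ^ ((J1.card : ℤ) - (J2.card : ℤ)) := by
    refine ((J.orderIsoOfFin hIJ.symm).toEquiv.prod_comp
        (fun j : J => if (j : Fin n) ∈ J1 then q else q⁻¹)).trans ?_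
    rw [Finset.prod_coe_sort J fun j => if j ∈ J1 then q else q⁻¹, hJ,
      Finset.prod_union hdisj, Finset.prod_congr rfl fun j (hj : j ∈ J1) => if_pos hj,
      Finset.prod_congr rfl fun j (hj : j ∈ J2) =>
        if_neg (Finset.disjoint_right.1 hdisj hj)]
    rw [Finset.prod_const, Finset.prod_const, zpow_sub₀ hq, zpow_natCast, zpow_natCast, inv_pow,
      div_eq_mul_inv]
  rw [← hprod]
  have hI : qMinor k n q I J = _ := dif_pos hIJ
  rw [hI, Finset.sum_mul, Finset.mul_sum, Finset.smul_sum]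
  refine Finset.sum_congr rfl fun σ _ => ?_
  rw [smul_mul_assoc, mul_smul_comm, smul_comm (∏ _, _)]
  congr 1
  exact Aux.prod_ofFn_mul _ _ _ _ fun l => hg _ ((J.orderIsoOfFin hIJ.symm) l).2 _
    (hIM ((I.orderIsoOfFin rfl) (σ l)).2)

end
end

section
/- Let I,J,M,N ⊆ {1,…,n} with |I| = |J| and |M| = |N|. If r([I|J],[M|N]) ≠ 0, then I∩M = J∩N and I∪M = J∪N. -/
/-!
The algebra `A` is spanned by monomials, each of which carries a row weight and a column weight,
namely the multisets of the row and of the column indices of its factors. The form `r` preserves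
total weight: if `r(a, b) ≠ 0` for monomials `a`, `b`, then
`rows a + rows b = cols a + cols b` (`Mono.r_weight`). On generators this is read off from the
prescribed values of `r`. It propagates to all monomials through the identities for `r(ab, c)` and
`r(a, bc)`, because `Δ` splits a monomial with weights `(α, β)` into tensors of monomials with
weights `(α, γ)` and `(γ, β)` (`Mono.comul_mem`).

Every monomial occurring in `[I|J]` has row weight `I` and column weight `J`, so a nonzero
`r([I|J], [M|N])` forces the multiset identity `I + M = J + N`. Comparing the elements of
multiplicity at least two and at least one gives the two asserted equalities of sets.
-/

open scoped TensorProduct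
open scoped Classical

noncomputable section

open QMat

namespace QMat

/-- `Mono k n q α β a` says that `a` is a monomial in the generators `X_{ij}` whose row indices form
the multiset `α` and whose column indices form the multiset `β`. -/
inductive Mono (k : Type*) [Field k] (n : ℕ) (q : k) :
    Multiset (Fin n) → Multiset (Fin n) → A k n q → Prop
  | one : Mono k n q 0 0 1
  | cons (i j : Fin n) {α β : Multiset (Fin n)} {a : A k n q} (h : Mono k n q α β a) :
      Mono k n q (i ::ₘ α) (j ::ₘ β) (X k n q i j * a)

section

variable {k : Type*} [Field k] {n : ℕ} {q : k}

theorem exists_ne_zero_of_mem_span {V W : Type*} [AddCommMonoid V] [Module k V] [AddCommMonoid W]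
    [Module k W] {f : V →ₗ[k] W} {S : Set V} {t : V} (ht : t ∈ Submodule.span k S)
    (h : f t ≠ 0) : ∃ s ∈ S, f s ≠ 0 := by
  by_contra! hS
  have hle : Submodule.span k S ≤ LinearMap.ker f := Submodule.span_le.2 fun s hs => hS s hs
  exact h (hle ht)

theorem biform_tmul (f g : A k n q →ₗ[k] k) (a b : A k n q) :
    biform k n q f g (a ⊗ₜ[k] b) = f a * g b := by
  simp [biform]

/-- Tensors of two monomials with composable weights `(α, γ)` and `(γ, β)`. -/
def splitSet (k : Type*) [Field k] (n : ℕ) (q : k) (α β : Multiset (Fin n)) :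
    Set (A k n q ⊗[k] A k n q) :=
  {t | ∃ γ b c, Mono k n q α γ b ∧ Mono k n q γ β c ∧ t = b ⊗ₜ[k] c}

theorem Mono.comul_mem {Δ : A k n q →ₐ[k] A k n q ⊗[k] A k n q} (hΔ : IsComul k n q Δ)
    {α β : Multiset (Fin n)} {a : A k n q} (ha : Mono k n q α β a) :
    Δ a ∈ Submodule.span k (splitSet k n q α β) := by
  induction ha with
  | one =>
    rw [map_one]
    exact Submodule.subset_span ⟨0, 1, 1, .one, .one, rfl⟩
  | @cons i j α β a _ ih =>
    rw [map_mul, hΔ, Finset.sum_mul]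
    refine Submodule.sum_mem _ fun l _ => ?_
    -- Left multiplication by `X_{il} ⊗ X_{lj}` sends split tensors to split tensors.
    have hle : Submodule.span k (splitSet k n q α β) ≤
        (Submodule.span k (splitSet k n q (i ::ₘ α) (j ::ₘ β))).comap
          (LinearMap.mulLeft k (X k n q i l ⊗ₜ[k] X k n q l j)) := by
      refine Submodule.span_le.2 ?_
      rintro _ ⟨γ, b, c, hb, hc, rfl⟩
      refine Submodule.subset_span ⟨l ::ₘ γ, _, _, hb.cons i l, hc.cons l j, ?_⟩
      simp [Algebra.TensorProduct.tmul_mul_tmul]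
    exact hle ih

theorem Mono.counit_weight {ε : A k n q →ₐ[k] k} (hε : IsCounit k n q ε)
    {α β : Multiset (Fin n)} {a : A k n q} (ha : Mono k n q α β a) (h : ε a ≠ 0) : α = β := by
  induction ha with
  | one => rfl
  | cons i j _ ih =>
    rw [map_mul, hε] at h
    have hij : i = j := by
      by_contra hij
      simp [hij] at h
    rw [ih (right_ne_zero_of_mul h), hij]

variable {Δ : A k n q →ₐ[k] A k n q ⊗[k] A k n q} {ε : A k n q →ₐ[k] k}
  {r : A k n q →ₗ[k] A k n q →ₗ[k] k}

theorem r_X_X_weight (hr : IsRForm k n q Δ ε r) {i j l m : Fin n}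
    (h : r (X k n q i j) (X k n q l m) ≠ 0) :
    ({i} + {l} : Multiset (Fin n)) = {j} + {m} := by
  rw [hr.2.2.2.2] at h
  split_ifs at h with h1 h2 h3
  · rw [h1.1, h1.2.1]
  · rw [h2.1, h2.2]
  · rw [h3.1, h3.2.1, add_comm]
  · exact absurd rfl h

theorem Mono.r_X_weight (hΔ : IsComul k n q Δ) (hε : IsCounit k n q ε)
    (hr : IsRForm k n q Δ ε r) {α β : Multiset (Fin n)} {v : A k n q}
    (hv : Mono k n q α β v) (i j : Fin n) (h : r (X k n q i j) v ≠ 0) :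
    {i} + α = {j} + β := by
  induction hv generalizing i j with
  | one =>
    rw [(hr.2.2.2.1 _).1, hε] at h
    have hij : i = j := by
      by_contra hij
      simp [hij] at h
    rw [hij]
  | @cons l m α β v _ ih =>
    rw [hr.2.2.1, hΔ, map_sum] at h
    obtain ⟨s, _, hs⟩ := Finset.exists_ne_zero_of_sum_ne_zero h
    rw [biform_tmul] at hs
    have h1 := ih i s (left_ne_zero_of_mul hs)
    have h2 := r_X_X_weight hr (right_ne_zero_of_mul hs)
    simp only [← Multiset.singleton_add]
    calc {i} + ({l} + α) = {l} + ({i} + α) := by abel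
      _ = ({s} + {l}) + β := by rw [h1]; abel
      _ = {j} + ({m} + β) := by rw [h2]; abel

/-- The form `r` preserves total weight on monomials. -/
theorem Mono.r_weight (hΔ : IsComul k n q Δ) (hε : IsCounit k n q ε)
    (hr : IsRForm k n q Δ ε r) {α β α' β' : Multiset (Fin n)} {u v : A k n q}
    (hu : Mono k n q α β u) (hv : Mono k n q α' β' v) (h : r u v ≠ 0) :
    α + α' = β + β' := by
  induction hu generalizing α' β' v with
  | one =>
    rw [(hr.2.2.2.1 _).2] at h
    rw [hv.counit_weight hε h]
  | @cons i j α β u _ ih =>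
    rw [hr.2.1] at h
    obtain ⟨_, ⟨γ, b, c, hb, hc, rfl⟩, hbc⟩ :=
      exists_ne_zero_of_mem_span
        (hv.comul_mem hΔ) h
    rw [biform_tmul] at hbc
    have h1 := hb.r_X_weight hΔ hε hr i j (left_ne_zero_of_mul hbc)
    have h2 := ih hc (right_ne_zero_of_mul hbc)
    simp only [← Multiset.singleton_add]
    calc {i} + α + α' = α + ({i} + α') := by abel
      _ = {j} + (α + γ) := by rw [h1]; abel
      _ = {j} + β + β' := by rw [h2]; abel

theorem mono_ofFn {t : ℕ} (f g : Fin t → Fin n) :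
    Mono k n q (Finset.univ.val.map f) (Finset.univ.val.map g)
      (List.ofFn fun l => X k n q (f l) (g l)).prod := by
  simp only [Fin.univ_val_map]
  induction t with
  | zero => simpa using Mono.one
  | succ t ih =>
    simp only [List.ofFn_succ, List.prod_cons, ← Multiset.cons_coe]
    exact (ih _ _).cons _ _

theorem map_univ_eq_val {t : ℕ} {S : Finset (Fin n)} (e : Fin t ≃ S) :
    Finset.univ.val.map (fun l => (e l : Fin n)) = S.val := by
  have h : Finset.univ.map (e.toEmbedding.trans (Function.Embedding.subtype _)) = S := by
    ext x
    simp only [Finset.mem_map, Finset.mem_univ, true_and]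
    constructor
    · rintro ⟨l, rfl⟩
      exact (e l).2
    · intro hx
      exact ⟨e.symm ⟨x, hx⟩, by simp⟩
  exact congrArg Finset.val h

/-- All monomials of the quantum minor `[I|J]` have weights `(I, J)`. -/
theorem qMinor_mem_span (I J : Finset (Fin n)) :
    qMinor k n q I J ∈ Submodule.span k {a | Mono k n q I.val J.val a} := by
  unfold qMinor
  split_ifs with h
  · refine Submodule.sum_mem _ fun σ _ => Submodule.smul_mem _ _ (Submodule.subset_span ?_)
    have hm := mono_ofFn (k := k) (q := q)
      (fun l => (((I.orderIsoOfFin rfl) (σ l) : I) : Fin n))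
      (fun l => (((J.orderIsoOfFin h.symm) l : J) : Fin n))
    have hI := map_univ_eq_val (σ.trans (I.orderIsoOfFin rfl).toEquiv)
    have hJ := map_univ_eq_val (J.orderIsoOfFin h.symm).toEquiv
    simp only [Equiv.trans_apply, RelIso.coe_fn_toEquiv] at hI hJ
    rwa [hI, hJ] at hm
  · exact Submodule.zero_mem _

end

end QMat

/-- If `r([I|J],[M|N]) ≠ 0` then `I∩M = J∩N` and `I∪M = J∪N`. -/
theorem stmt10 (k : Type*) [Field k] (n : ℕ) (hn : 0 < n) (q : k) (hq : q ≠ 0)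
    (Δ : A k n q →ₐ[k] A k n q ⊗[k] A k n q) (ε : A k n q →ₐ[k] k)
    (hΔ : IsComul k n q Δ) (hε : IsCounit k n q ε)
    (r : A k n q →ₗ[k] A k n q →ₗ[k] k) (hr : IsRForm k n q Δ ε r)
    (I J M N : Finset (Fin n)) (hIJ : I.card = J.card) (hMN : M.card = N.card)
    (hne : r (qMinor k n q I J) (qMinor k n q M N) ≠ 0) :
    I ∩ M = J ∩ N ∧ I ∪ M = J ∪ N := by
  obtain ⟨a, ha, hav⟩ := exists_ne_zero_of_mem_span (f := r.flip (qMinor k n q M N))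
    (qMinor_mem_span I J) hne
  obtain ⟨b, hb, hab⟩ := exists_ne_zero_of_mem_span (f := r a) (qMinor_mem_span M N) hav
  have hw : I.val + M.val = J.val + N.val := Mono.r_weight hΔ hε hr ha hb hab
  have hc : ∀ x : Fin n, ((if x ∈ I then 1 else 0) + (if x ∈ M then 1 else 0) : ℕ) =
      (if x ∈ J then 1 else 0) + (if x ∈ N then 1 else 0) := by
    intro x
    simpa [Multiset.count_eq_of_nodup, Finset.nodup] using congrArg (Multiset.count x) hw
  constructor <;>
  · ext x
    have hx := hc x
    simp only [Finset.mem_inter, Finset.mem_union]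
    split_ifs at hx <;> simp_all

end
end
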